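/- arXiv:1301.3552 — 2 statements merged into one kernel-verified Lean document; each statement's English description precedes it below -/
import Mathlib

section
/- Let (A,B,C,D) be a minimal state-space realization of an m×m transfer function R and let ω̄ > 0. Assume every eigenvalue of A has nonpositive real part and, for every purely imaginary eigenvalue jω_i of A with 0 < ω_i ≤ ω̄, the residue Φ_i = lim_{s→jω_i}(s − jω_i)(sI − A)⁻¹ exists (i.e., jω_i is a simple pole of the resolvent of A). Then the following are equivalent: (1) the system is finite frequency negative imaginary (FFNI) with bandwidth ω̄; (2) det(A) ≠ 0, D = Dᵀ, CAΦ_iB = (CAΦ_iB)ᴴ ⪰ 0 for every purely imaginary eigenvalue jω_i of A with 0 < ω_i ≤ ω̄, and there exist real symmetric matrices Y and X ⪰ 0 such that AY + YAᵀ − AXAᵀ + ω̄²X ⪯ 0, B + AYCᵀ = 0, and CX = 0. -/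
open Matrix Filter Topology ComplexOrder

/-- The (complex) eigenvalues of a real square matrix. -/
noncomputable def eigs {k : Type*} [Fintype k] [DecidableEq k] (A : Matrix k k ℝ) : Set ℂ :=
  spectrum ℂ (A.map Complex.ofReal)

/-- A real square matrix is Hurwitz if all of its (complex) eigenvalues have negative real
part. -/
noncomputable def IsHurwitz {k : Type*} [Fintype k] [DecidableEq k] (A : Matrix k k ℝ) : Prop :=
  ∀ μ ∈ eigs A, μ.re < 0

/-- Transfer function `R(s) = C (sI - A)⁻¹ B + D` of a real state-space system, as a
complex matrix. -/
noncomputable def tf {n m : ℕ} (A : Matrix (Fin n) (Fin n) ℝ) (B : Matrix (Fin n) (Fin m) ℝ)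
    (C : Matrix (Fin m) (Fin n) ℝ) (D : Matrix (Fin m) (Fin m) ℝ) (s : ℂ) :
    Matrix (Fin m) (Fin m) ℂ :=
  C.map (Complex.ofReal) * (s • (1 : Matrix (Fin n) (Fin n) ℂ) - A.map Complex.ofReal)⁻¹ *
      B.map Complex.ofReal + D.map Complex.ofReal

/-- A state-space realization `(A,B,C,D)` is minimal if the controllability matrix and the
observability matrix both have rank `n`. -/
def IsMinimal {n m : ℕ} (A : Matrix (Fin n) (Fin n) ℝ) (B : Matrix (Fin n) (Fin m) ℝ)
    (C : Matrix (Fin m) (Fin n) ℝ) : Prop :=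
  (Matrix.of fun (i : Fin n) (p : Fin n × Fin m) => (A ^ (p.1 : ℕ) * B) i p.2).rank = n ∧
  (Matrix.of fun (p : Fin n × Fin m) (i : Fin n) => (C * A ^ (p.1 : ℕ)) p.2 i).rank = n

/-- The system `(A,B,C,D)` is negative imaginary (NI). -/
noncomputable def IsNI {n m : ℕ} (A : Matrix (Fin n) (Fin n) ℝ) (B : Matrix (Fin n) (Fin m) ℝ)
    (C : Matrix (Fin m) (Fin n) ℝ) (D : Matrix (Fin m) (Fin m) ℝ) : Prop :=
  (∀ μ ∈ eigs A, μ ≠ 0 ∧ μ.re ≤ 0) ∧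
  (∀ ω : ℝ, 0 < ω → (Complex.I * ω) ∉ eigs A →
    (Complex.I • (tf A B C D (Complex.I * ω) - (tf A B C D (Complex.I * ω))ᴴ)).PosSemidef) ∧
  (∀ ω : ℝ, 0 < ω → (Complex.I * ω) ∈ eigs A →
    ∃ K : Matrix (Fin m) (Fin m) ℂ,
      Tendsto (fun s : ℂ => (s - Complex.I * ω) • Complex.I • tf A B C D s)
        (𝓝[≠] (Complex.I * ω)) (𝓝 K) ∧ K.PosSemidef)

/-- The system `(A,B,C,D)` is strictly negative imaginary (SNI). -/
noncomputable def IsSNI {n m : ℕ} (A : Matrix (Fin n) (Fin n) ℝ) (B : Matrix (Fin n) (Fin m) ℝ)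
    (C : Matrix (Fin m) (Fin n) ℝ) (D : Matrix (Fin m) (Fin m) ℝ) : Prop :=
  IsHurwitz A ∧
  (∀ ω : ℝ, 0 < ω →
    (Complex.I • (tf A B C D (Complex.I * ω) - (tf A B C D (Complex.I * ω))ᴴ)).PosDef)

/-- The system `(A,B,C,D)` is finite frequency negative imaginary (FFNI) with bandwidth `ωb`. -/
noncomputable def IsFFNI {n m : ℕ} (A : Matrix (Fin n) (Fin n) ℝ) (B : Matrix (Fin n) (Fin m) ℝ)
    (C : Matrix (Fin m) (Fin n) ℝ) (D : Matrix (Fin m) (Fin m) ℝ) (ωb : ℝ) : Prop :=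
  (∀ μ ∈ eigs A, μ ≠ 0 ∧ μ.re ≤ 0) ∧
  (∀ ω : ℝ, 0 < ω → ω ≤ ωb → (Complex.I * ω) ∉ eigs A →
    (Complex.I • (tf A B C D (Complex.I * ω) - (tf A B C D (Complex.I * ω))ᴴ)).PosSemidef) ∧
  (∀ ω : ℝ, 0 < ω → ω ≤ ωb → (Complex.I * ω) ∈ eigs A →
    ∃ K : Matrix (Fin m) (Fin m) ℂ,
      Tendsto (fun s : ℂ => (s - Complex.I * ω) • Complex.I • tf A B C D s)
        (𝓝[≠] (Complex.I * ω)) (𝓝 K) ∧ K.PosSemidef) ∧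
  D = Dᵀ

/-
At a regular frequency `ω` the FFNI inequality amounts to `Re (v B uᴴ) ≥ 0` for every pair of rows
`(v, u)` with `v A = jω (v - u C)`. If the linear matrix inequality has no solution, conic duality
yields a positive semidefinite matrix `Gᵀ G` violating it, and a unitary dilation followed by a
diagonalization turns `G` into rows that are each such a pair for a frequency in `[-ω̄, ω̄]`; one of
them violates the frequency inequality. Separation applies because the cone of feasible right-hand
sides is closed: by observability the homogeneous inequality has only the zero solution. At a pole
the frequency inequality is obtained as a limit from lower frequencies, the residue term being
killed by observability.

Conversely, with `L = C (jωI - A)⁻¹` and `N = -(AY + YAᵀ - AXAᵀ + ω̄²X)`, a solution `(Y, X)` gives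
`j(R(jω) - R(jω)ᴴ) = ω (L N Lᴴ + (ω̄² - ω²) L X Lᴴ)`.
-/

open Complex (I ofReal)

section Gram

variable {𝕜 E V ι κ : Type*} [RCLike 𝕜] [Fintype ι]

theorem exists_linearIsometry_comp_eq_of_norm_eq [AddCommGroup E] [Module 𝕜 E]
    [NormedAddCommGroup V] [InnerProductSpace 𝕜 V] [FiniteDimensional 𝕜 V]
    (f g : E →ₗ[𝕜] V) (hfg : ∀ x, ‖f x‖ = ‖g x‖) :
    ∃ w : V →ₗᵢ[𝕜] V, w.toLinearMap ∘ₗ f = g := by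
  obtain ⟨s, hs⟩ := f.rangeRestrict.exists_rightInverse_of_surjective f.range_rangeRestrict
  have hfs (y : f.range) : f (s y) = y := congrArg Subtype.val (LinearMap.congr_fun hs y)
  let w₀ : f.range →ₗᵢ[𝕜] V := ⟨g ∘ₗ s, fun y => by
    rw [LinearMap.comp_apply, ← hfg, hfs, Submodule.coe_norm]⟩
  refine ⟨w₀.extend, LinearMap.ext fun x => ?_⟩
  have hx : g (s (f.rangeRestrict x) - x) = 0 := by
    rw [← norm_eq_zero, ← hfg, map_sub, hfs, LinearMap.codRestrict_apply, sub_self, norm_zero]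
  exact (w₀.extend_apply (f.rangeRestrict x)).trans (sub_eq_zero.1 ((map_sub g _ _).symm.trans hx))

theorem norm_toEuclideanLin_sq [Fintype κ] [DecidableEq κ] (M : Matrix ι κ 𝕜)
    (x : EuclideanSpace 𝕜 κ) :
    ‖toEuclideanLin M x‖ ^ 2 = RCLike.re (inner 𝕜 x (toEuclideanLin (Mᴴ * M) x)) := by
  classical
  rw [toLpLin_mul_same, LinearMap.comp_apply, toEuclideanLin_conjTranspose_eq_adjoint,
    LinearMap.adjoint_inner_right, inner_self_eq_norm_sq]

theorem exists_unitary_mul_eq_of_conjTranspose_mul_self_eq [Finite κ] [DecidableEq ι]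
    {M N : Matrix ι κ 𝕜} (h : Mᴴ * M = Nᴴ * N) :
    ∃ W : Matrix ι ι 𝕜, Wᴴ * W = 1 ∧ W * M = N := by
  classical
  cases nonempty_fintype κ
  obtain ⟨w, hw⟩ := exists_linearIsometry_comp_eq_of_norm_eq (toEuclideanLin M) (toEuclideanLin N)
    fun x => (sq_eq_sq₀ (norm_nonneg _) (norm_nonneg _)).1 <| by
      rw [norm_toEuclideanLin_sq, norm_toEuclideanLin_sq, h]
  obtain ⟨W, hW⟩ := (toEuclideanLin (𝕜 := 𝕜) (m := ι) (n := ι)).surjective w.toLinearMap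
  refine ⟨W, toEuclideanLin.injective (LinearMap.ext fun x => ?_), toEuclideanLin.injective ?_⟩
  · refine ext_inner_left 𝕜 fun y => ?_
    rw [toLpLin_mul_same, LinearMap.comp_apply, toEuclideanLin_conjTranspose_eq_adjoint,
      LinearMap.adjoint_inner_right, hW, toLpLin_one]
    exact w.inner_map_map y x
  · rw [toLpLin_mul_same, hW, hw]

open scoped MatrixOrder in
theorem exists_eq_conjTranspose_mul_self [Fintype κ] {Z : Matrix κ κ 𝕜} (hZ : Z.PosSemidef) :
    ∃ G : Matrix κ κ 𝕜, Z = Gᴴ * G := by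
  classical
  exact CStarAlgebra.nonneg_iff_eq_star_mul_self.1 hZ.nonneg

end Gram

section SkewDecomposition

variable {𝕜 ι κ : Type*} [RCLike 𝕜] [Fintype ι] [DecidableEq ι] [Fintype κ] [DecidableEq κ]

theorem posSemidef_one_sub_skewPart_of_unitary {W : Matrix ι ι 𝕜} (hW : Wᴴ * W = 1) :
    (1 - ((2 : 𝕜)⁻¹ • (W - Wᴴ))ᴴ * ((2 : 𝕜)⁻¹ • (W - Wᴴ))).PosSemidef := by
  have hW' : W * Wᴴ = 1 := mul_eq_one_comm.1 hW
  convert posSemidef_conjTranspose_mul_self ((2 : 𝕜)⁻¹ • (W + Wᴴ)) using 1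
  simp only [conjTranspose_smul, conjTranspose_sub, conjTranspose_add, conjTranspose_conjTranspose,
    smul_mul, Matrix.mul_smul, Matrix.add_mul, Matrix.sub_mul, Matrix.mul_add, Matrix.mul_sub,
    hW, hW', star_inv₀, star_ofNat]
  module

-- The Gram matrices of `[Q, -P; 0, E]` and `[P, Q; E, 0]` agree when `QᴴQ - PᴴP = EᴴE`; half the
-- skew part of a unitary `W` carrying the first to the second maps `[Q; 0]` to `[P; 0]`.
theorem exists_skewHermitian_contraction (P Q : Matrix ι κ 𝕜) (hskew : Qᴴ * P + Pᴴ * Q = 0)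
    (hcontr : (Qᴴ * Q - Pᴴ * P).PosSemidef) :
    ∃ K : Matrix (ι ⊕ κ) (ι ⊕ κ) 𝕜, Kᴴ = -K ∧ (1 - Kᴴ * K).PosSemidef ∧
      K * (fromRows Q 0 : Matrix (ι ⊕ κ) κ 𝕜) = fromRows P 0 := by
  obtain ⟨E, hE⟩ := exists_eq_conjTranspose_mul_self hcontr
  have hEQ : Eᴴ * E + Pᴴ * P = Qᴴ * Q := by rw [← hE, sub_add_cancel]
  have hPQ : Pᴴ * Q = -(Qᴴ * P) := eq_neg_of_add_eq_zero_right hskew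
  let a : Matrix (ι ⊕ κ) κ 𝕜 := fromRows Q 0
  let b : Matrix (ι ⊕ κ) κ 𝕜 := fromRows P E
  let c : Matrix (ι ⊕ κ) κ 𝕜 := fromRows (-P) E
  have hgram : (fromCols a c)ᴴ * fromCols a c = (fromCols b a)ᴴ * fromCols b a := by
    simp only [a, b, c, conjTranspose_fromCols_eq_fromRows_conjTranspose, fromRows_mul_fromCols,
      conjTranspose_fromRows_eq_fromCols_conjTranspose, fromCols_mul_fromRows]
    congr 1 <;> simp [hPQ, ← hEQ, add_comm]
  obtain ⟨W, hW, hWac⟩ := exists_unitary_mul_eq_of_conjTranspose_mul_self_eq hgram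
  obtain ⟨hWa, hWc⟩ := fromCols_inj ((mul_fromCols W a c).symm.trans hWac)
  have hWa' : Wᴴ * a = c := by rw [← hWc, ← Matrix.mul_assoc, hW, Matrix.one_mul]
  refine ⟨(2 : 𝕜)⁻¹ • (W - Wᴴ), ?_, posSemidef_one_sub_skewPart_of_unitary hW, ?_⟩
  · simp [conjTranspose_smul, ← smul_neg]
  · change _ • (W - Wᴴ) * a = _
    rw [smul_mul, Matrix.sub_mul, hWa, hWa']
    ext (i | i) j
    · simp [b, c, ← two_mul]
    · simp [b, c]

theorem exists_diagonalization_of_skewHermitian_contraction {K : Matrix ι ι ℂ} (hK : Kᴴ = -K)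
    (hcontr : (1 - Kᴴ * K).PosSemidef) :
    ∃ (U : Matrix ι ι ℂ) (σ : ι → ℝ), Uᴴ * U = 1 ∧ (∀ i, |σ i| ≤ 1) ∧
      U * K = diagonal (fun i => I * (σ i : ℂ)) * U := by
  have hH : (-I • K).IsHermitian := by simp [IsHermitian, conjTranspose_smul, hK]
  let U : Matrix ι ι ℂ := (hH.eigenvectorUnitary : Matrix ι ι ℂ)ᴴ
  let Δ : Matrix ι ι ℂ := diagonal fun i => I * (hH.eigenvalues i : ℂ)
  have hU : Uᴴ * U = 1 := by
    simpa [U, star_eq_conjTranspose] using Unitary.coe_mul_star_self hH.eigenvectorUnitary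
  have hU' : U * Uᴴ = 1 := mul_eq_one_comm.1 hU
  have hdiag : U * K * Uᴴ = Δ := by
    have h := hH.conjStarAlgAut_star_eigenvectorUnitary
    rw [Unitary.conjStarAlgAut_apply] at h
    have h' := congrArg (I • ·) h
    simpa [U, Δ, star_eq_conjTranspose, smul_smul, ← diagonal_smul, Function.comp_def,
      Pi.smul_def] using h'
  have hUK : U * K = Δ * U := by
    rw [← hdiag, Matrix.mul_assoc _ Uᴴ, hU, Matrix.mul_one]
  refine ⟨U, hH.eigenvalues, hU, fun i => ?_, hUK⟩
  have hpsd : (1 - Δᴴ * Δ).PosSemidef := by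
    convert hcontr.mul_mul_conjTranspose_same U using 1
    calc 1 - Δᴴ * Δ = U * Uᴴ - (U * Kᴴ) * (Uᴴ * U) * K * Uᴴ := by
          simp [← hdiag, hU', Matrix.mul_assoc]
      _ = U * (1 - Kᴴ * K) * Uᴴ := by
          simp [hU, Matrix.mul_sub, Matrix.sub_mul, Matrix.mul_assoc]
  have hi : 0 ≤ (1 - Δᴴ * Δ) i i := hpsd.diag_nonneg
  have hi' := (Complex.le_def.1 hi).1
  rw [abs_le_one_iff_mul_self_le_one]
  simpa [Δ, diagonal_conjTranspose] using hi'

theorem exists_isometry_mul_eq_diagonal_mul {w : ℝ} (hw : 0 < w) (P Q : Matrix ι κ ℂ)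
    (hskew : Qᴴ * P + Pᴴ * Q = 0) (hcontr : (w ^ 2 • (Qᴴ * Q) - Pᴴ * P).PosSemidef) :
    ∃ (T : Matrix (ι ⊕ κ) ι ℂ) (σ : ι ⊕ κ → ℝ), Tᴴ * T = 1 ∧ (∀ i, |σ i| ≤ w) ∧
      T * P = diagonal (fun i => I * (σ i : ℂ)) * (T * Q) := by
  obtain ⟨K, hK, hKc, hKQ⟩ := exists_skewHermitian_contraction P (w • Q)
    (by simp [conjTranspose_smul, ← smul_add, hskew])
    (by simpa [conjTranspose_smul, smul_smul, sq] using hcontr)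
  obtain ⟨U, σ, hU, hσ, hUK⟩ := exists_diagonalization_of_skewHermitian_contraction hK hKc
  let J : Matrix (ι ⊕ κ) ι ℂ := fromRows 1 0
  have hJ (R : Matrix ι κ ℂ) : J * R = fromRows R 0 := by simp [J, fromRows_mul]
  refine ⟨U * J, fun i => w * σ i, ?_, fun i => ?_, ?_⟩
  · rw [conjTranspose_mul, Matrix.mul_assoc, ← Matrix.mul_assoc Uᴴ, hU, Matrix.one_mul]
    simp [J, conjTranspose_fromRows_eq_fromCols_conjTranspose, fromCols_mul_fromRows]
  · rw [abs_mul, abs_of_pos hw]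
    exact mul_le_of_le_one_right hw.le (hσ i)
  · have hscale : diagonal (fun i => I * ((w * σ i : ℝ) : ℂ))
        = w • diagonal (fun i => I * (σ i : ℂ)) := by
      rw [← diagonal_smul]
      congr 1
      ext i
      simp [mul_left_comm]
    calc U * J * P = U * K * (J * (w • Q)) := by
          rw [Matrix.mul_assoc, Matrix.mul_assoc, hJ, hJ, hKQ]
      _ = diagonal (fun i => I * ((w * σ i : ℝ) : ℂ)) * (U * J * Q) := by
          rw [hUK, hscale]; simp only [Matrix.mul_assoc, Matrix.mul_smul, smul_mul]

end SkewDecomposition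

section PosSemidefDuality

variable {κ μ : Type*}

theorem isClosed_setOf_posSemidef [Finite κ] :
    IsClosed {X : Matrix κ κ ℝ | X.PosSemidef} := by
  cases nonempty_fintype κ
  simp only [posSemidef_iff_dotProduct_mulVec, Set.ofPred_and, Set.ofPred_forall]
  refine (isClosed_eq (by fun_prop) (by fun_prop)).inter (isClosed_iInter fun x => ?_)
  exact isClosed_le (by fun_prop) (by fun_prop)

open scoped MatrixOrder in
theorem mul_conjTranspose_eq_zero_of_posSemidef_neg [Fintype κ] [Finite μ] {𝕜 : Type*} [RCLike 𝕜]
    {X : Matrix κ κ 𝕜} {C : Matrix μ κ 𝕜} (hX : X.PosSemidef)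
    (hC : (-(C * X * Cᴴ)).PosSemidef) : X * Cᴴ = 0 := by
  classical
  cases nonempty_fintype μ
  have hzero : C * X * Cᴴ = 0 :=
    le_antisymm (neg_nonneg.1 hC.nonneg) (hX.mul_mul_conjTranspose_same C).nonneg
  obtain ⟨G, rfl⟩ := exists_eq_conjTranspose_mul_self hX
  have hG : G * Cᴴ = 0 := by
    rw [← conjTranspose_mul_self_eq_zero, ← hzero]
    simp [Matrix.mul_assoc]
  rw [Matrix.mul_assoc, hG, Matrix.mul_zero]

theorem fromBlocks_zero₂₂_eq_zero_of_posSemidef [Finite κ] [Finite μ] {𝕜 : Type*} [RCLike 𝕜]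
    {N : Matrix κ κ 𝕜} {R : Matrix κ μ 𝕜} {S : Matrix μ κ 𝕜}
    (h : (fromBlocks N R S 0).PosSemidef) : R = 0 := by
  classical
  cases nonempty_fintype κ
  cases nonempty_fintype μ
  have hmulVec (x : μ → 𝕜) : R *ᵥ x = 0 := by
    have hx := (h.dotProduct_mulVec_zero_iff (Sum.elim 0 x)).1
      (by simp [fromBlocks_mulVec, sumElim_dotProduct_sumElim, Function.star_sumElim])
    rw [fromBlocks_mulVec] at hx
    simpa using congrArg (· ∘ Sum.inl) hx
  exact ext_of_mulVec_single fun j => (hmulVec _).trans (zero_mulVec _).symm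

variable [Fintype κ]

theorem exists_trace_mul_eq {R : Type*} [CommSemiring R]
    (f : Matrix κ κ R →ₗ[R] R) : ∃ Z : Matrix κ κ R, ∀ M, f M = (Z * M).trace := by
  classical
  refine ⟨of fun i j => f (single j i 1), fun M => ?_⟩
  have hf : f = traceLinearMap κ R R ∘ₗ LinearMap.mulLeft R (of fun i j => f (single j i 1)) := by
    refine ext_linearMap _ fun i j => LinearMap.ext_ring ?_
    simp [trace_mul_single]
  exact LinearMap.congr_fun hf M

theorem posSemidef_of_forall_trace_mul_nonneg {R : Matrix κ κ ℝ} (hR : R.IsSymm)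
    (h : ∀ X : Matrix κ κ ℝ, X.PosSemidef → 0 ≤ (X * R).trace) : R.PosSemidef := by
  refine PosSemidef.of_dotProduct_mulVec_nonneg (isHermitian_iff_isSymm.2 hR) fun x => ?_
  have hx := h _ (posSemidef_vecMulVec_self_star x)
  rwa [vecMulVec_mul, trace_vecMulVec, dotProduct_comm, ← dotProduct_mulVec] at hx

theorem eq_zero_of_forall_trace_mul_nonneg {R : Matrix κ κ ℝ} (hR : R.IsSymm)
    (h : ∀ Y : Matrix κ κ ℝ, Y.IsSymm → 0 ≤ (Y * R).trace) : R = 0 := by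
  have hneg := h (-R) hR.neg
  have hsq : (Rᴴ * R).trace = 0 := by
    refine le_antisymm ?_ (posSemidef_conjTranspose_mul_self R).trace_nonneg
    rw [isHermitian_iff_isSymm.2 hR]
    simpa using hneg
  exact trace_conjTranspose_mul_self_eq_zero_iff.1 hsq

theorem exists_posSemidef_trace_mul_eq (f : Matrix κ κ ℝ →ₗ[ℝ] ℝ)
    (hf : ∀ S : Matrix κ κ ℝ, S.PosSemidef → 0 ≤ f S) :
    ∃ Z : Matrix κ κ ℝ, Z.PosSemidef ∧ ∀ M : Matrix κ κ ℝ, M.IsSymm → f M = (Z * M).trace := by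
  obtain ⟨Z, hZ⟩ := exists_trace_mul_eq f
  have hsymm (M : Matrix κ κ ℝ) (hM : M.IsSymm) :
      f M = (((2 : ℝ)⁻¹ • (Z + Zᵀ)) * M).trace := by
    have ht : (Zᵀ * M).trace = (Z * M).trace := by
      rw [← trace_transpose, transpose_mul, transpose_transpose, hM, trace_mul_comm]
    rw [smul_mul, Matrix.add_mul, trace_smul, trace_add, ht, ← hZ, smul_eq_mul]
    ring
  refine ⟨(2 : ℝ)⁻¹ • (Z + Zᵀ), posSemidef_of_forall_trace_mul_nonneg ?_ fun X hX => ?_, hsymm⟩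
  · simp [IsSymm, add_comm]
  · rw [trace_mul_comm, ← hsymm X (isHermitian_iff_isSymm.1 hX.isHermitian)]
    exact hf X hX

end PosSemidefDuality

section ConeSeparation

variable {E F : Type*} [NormedAddCommGroup E] [NormedSpace ℝ E] [FiniteDimensional ℝ E]
  [NormedAddCommGroup F] [NormedSpace ℝ F]

theorem exists_mul_norm_le_norm_map (T : E →L[ℝ] F) (K : ProperCone ℝ E)
    (hT : ∀ x ∈ K, T x = 0 → x = 0) : ∃ δ > 0, ∀ x ∈ K, δ * ‖x‖ ≤ ‖T x‖ := by
  have hcompact : IsCompact ((K : Set E) ∩ Metric.sphere 0 1) :=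
    (isCompact_sphere 0 1).inter_left K.isClosed
  have hpos (x : E) (hx : x ∈ (K : Set E) ∩ Metric.sphere 0 1) : 0 < ‖T x‖ :=
    norm_pos_iff.2 fun h0 => ne_zero_of_mem_unit_sphere ⟨x, hx.2⟩ (hT x hx.1 h0)
  obtain ⟨δ, hδ, hle⟩ := hcompact.exists_forall_le' (by fun_prop) hpos
  refine ⟨δ, hδ, fun x hx => ?_⟩
  rcases eq_or_ne x 0 with rfl | h0
  · simp
  · have hx₀ : 0 < ‖x‖ := norm_pos_iff.2 h0
    have h := hle (‖x‖⁻¹ • x) ⟨K.smul_mem hx (by positivity), by simp [norm_smul, h0]⟩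
    rwa [map_smul, norm_smul, norm_inv, norm_norm, inv_mul_eq_div, le_div_iff₀ hx₀] at h

theorem isClosed_image_of_forall_map_eq_zero (T : E →L[ℝ] F) (K : ProperCone ℝ E)
    (hT : ∀ x ∈ K, T x = 0 → x = 0) : IsClosed (T '' K) := by
  obtain ⟨δ, hδ, hle⟩ := exists_mul_norm_le_norm_map T K hT
  have hcob : Tendsto (fun x : (K : Set E) => T x) (cocompact _) (Bornology.cobounded F) := by
    rw [← tendsto_norm_atTop_iff_cobounded]
    exact tendsto_atTop_mono (fun x => hle x x.2) <| Tendsto.const_mul_atTop hδ <|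
      tendsto_norm_cocompact_atTop.comp K.isClosed.isClosedEmbedding_subtypeVal.tendsto_cocompact
  have hproper : IsProperMap fun x : (K : Set E) => T x :=
    isProperMap_iff_tendsto_cocompact.2
      ⟨by fun_prop, hcob.mono_right Metric.cobounded_le_cocompact⟩
  rw [Set.image_eq_range]
  exact hproper.isClosedMap.isClosed_range

theorem exists_dual_nonneg_of_notMem_image (T : E →L[ℝ] F) (K : ProperCone ℝ E)
    (hT : ∀ x ∈ K, T x = 0 → x = 0) {y : F} (hy : y ∉ T '' K) :
    ∃ f : F →L[ℝ] ℝ, (∀ x ∈ K, 0 ≤ f (T x)) ∧ f y < 0 := by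
  let K' : ProperCone ℝ F :=
    ⟨K.toPointedCone.map T.toLinearMap, isClosed_image_of_forall_map_eq_zero T K hT⟩
  obtain ⟨f, hf, hfy⟩ := K'.hyperplane_separation_point hy
  exact ⟨f, fun x hx => hf _ ⟨x, hx, rfl⟩, hfy⟩

end ConeSeparation

section Complexification

variable {ι κ μ : Type*}

theorem map_ofReal_mul [Fintype κ] (M : Matrix ι κ ℝ) (N : Matrix κ μ ℝ) :
    (M * N).map ofReal = M.map ofReal * N.map ofReal :=
  Matrix.map_mul (f := Complex.ofRealHom)

theorem conjTranspose_map_ofReal (M : Matrix ι κ ℝ) : (M.map ofReal)ᴴ = Mᵀ.map ofReal := by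
  ext i j
  simp

theorem star_vecMul_map_ofReal [Fintype ι] (F : Matrix ι κ ℝ) (x : ι → ℂ) :
    star (x ᵥ* F.map ofReal) = star x ᵥ* F.map ofReal := by
  rw [star_vecMul, conjTranspose_map_ofReal, ← mulVec_transpose, transpose_map]

theorem det_map_ofReal [Fintype κ] [DecidableEq κ] (M : Matrix κ κ ℝ) :
    (M.map ofReal).det = M.det :=
  (RingHom.map_det Complex.ofRealHom M).symm

theorem posSemidef_map_ofReal [Finite κ] {Z : Matrix κ κ ℝ} (hZ : Z.PosSemidef) :
    (Z.map ofReal).PosSemidef := by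
  classical
  cases nonempty_fintype κ
  obtain ⟨G, rfl⟩ := exists_eq_conjTranspose_mul_self hZ
  rw [map_ofReal_mul, conjTranspose_eq_transpose_of_trivial, ← conjTranspose_map_ofReal]
  exact posSemidef_conjTranspose_mul_self _

end Complexification

section FrequencyDuality

variable {ν κ ι : Type*} [Fintype ν]

/-- The operator `(Y, X) ↦ F Y Hᵀ + H Y Fᵀ + w² H X Hᵀ - F X Fᵀ` of the generalized
Kalman–Yakubovich–Popov lemma on the band `|σ| ≤ w`: the multiplier `Y` accounts for a row `g`
satisfying `g F = iσ g H` with `σ` real, the multiplier `X` for `|σ| ≤ w`. -/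
def kypOperator (F H : Matrix κ ν ℝ) (w : ℝ) (Y X : Matrix ν ν ℝ) : Matrix κ κ ℝ :=
  F * Y * Hᵀ + H * Y * Fᵀ + w ^ 2 • (H * X * Hᵀ) - F * X * Fᵀ

theorem isSymm_kypOperator (F H : Matrix κ ν ℝ) (w : ℝ) {Y X : Matrix ν ν ℝ} (hY : Y.IsSymm)
    (hX : X.IsSymm) : (kypOperator F H w Y X).IsSymm := by
  simp only [IsSymm, kypOperator, transpose_sub, transpose_add, transpose_smul, transpose_mul,
    transpose_transpose, hY.eq, hX.eq, Matrix.mul_assoc]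
  abel

variable [Fintype κ]

theorem trace_transpose_mul_self_mul_kypOperator [Fintype ι] (F H : Matrix κ ν ℝ) (w : ℝ)
    (Y X : Matrix ν ν ℝ) (G : Matrix ι κ ℝ) :
    (Gᵀ * G * kypOperator F H w Y X).trace =
      (Y * ((G * H)ᵀ * (G * F) + (G * F)ᵀ * (G * H))).trace +
        (X * (w ^ 2 • ((G * H)ᵀ * (G * H)) - (G * F)ᵀ * (G * F))).trace := by
  have hcycle (M N : Matrix κ ν ℝ) (R : Matrix ν ν ℝ) :
      (Gᵀ * G * (M * R * Nᵀ)).trace = (R * ((G * N)ᵀ * (G * M))).trace := by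
    rw [show Gᵀ * G * (M * R * Nᵀ) = Gᵀ * (G * M) * (R * Nᵀ) by simp only [Matrix.mul_assoc],
      trace_mul_comm, transpose_mul]
    simp only [Matrix.mul_assoc]
  simp only [kypOperator, Matrix.mul_add, Matrix.mul_sub, Matrix.mul_smul, trace_add, trace_sub,
    trace_smul, hcycle]
  ring

/-- The cone of triples `(Y, X, S)` with `Y` symmetric and `X`, `S` positive semidefinite: the
unknowns of a linear matrix inequality, `S` being the slack. -/
def lmiCone (ν κ : Type*) [Fintype ν] [Fintype κ] :
    ProperCone ℝ (Matrix ν ν ℝ × Matrix ν ν ℝ × Matrix κ κ ℝ) where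
  carrier := {p | p.1.IsSymm ∧ p.2.1.PosSemidef ∧ p.2.2.PosSemidef}
  add_mem' hp hq := ⟨hp.1.add hq.1, hp.2.1.add hq.2.1, hp.2.2.add hq.2.2⟩
  zero_mem' := ⟨isSymm_zero, .zero, .zero⟩
  smul_mem' c _ hp := ⟨hp.1.smul (c : ℝ), hp.2.1.smul c.2, hp.2.2.smul c.2⟩
  isClosed' := (isClosed_eq (by fun_prop) (by fun_prop)).inter <|
    (isClosed_setOf_posSemidef.preimage (by fun_prop)).inter
      (isClosed_setOf_posSemidef.preimage (by fun_prop))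

/-- The map `(Y, X, S) ↦ S + kypOperator F H w Y X`, so that `M` is in the image of `lmiCone` iff
`kypOperator F H w Y X ⪯ M` is feasible. -/
def kypSlackMap (F H : Matrix κ ν ℝ) (w : ℝ) :
    Matrix ν ν ℝ × Matrix ν ν ℝ × Matrix κ κ ℝ →ₗ[ℝ] Matrix κ κ ℝ where
  toFun p := p.2.2 + kypOperator F H w p.1 p.2.1
  map_add' p q := by
    simp only [kypOperator, Prod.fst_add, Prod.snd_add, Matrix.mul_add, Matrix.add_mul, smul_add]
    abel
  map_smul' c p := by
    simp only [kypOperator, Prod.smul_fst, Prod.smul_snd, Matrix.mul_smul, Matrix.smul_mul,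
      RingHom.id_apply, smul_add, smul_sub, smul_comm (w ^ 2) c]

open scoped Matrix.Norms.Elementwise in
theorem exists_functional_of_kyp_infeasible {F H : Matrix κ ν ℝ} {w : ℝ} {M : Matrix κ κ ℝ}
    (hnondeg : ∀ Y X : Matrix ν ν ℝ, Y.IsSymm → X.PosSemidef →
      (-kypOperator F H w Y X).PosSemidef → Y = 0 ∧ X = 0)
    (hM : ¬∃ Y X : Matrix ν ν ℝ, Y.IsSymm ∧ X.PosSemidef ∧
      (M - kypOperator F H w Y X).PosSemidef) :
    ∃ f : Matrix κ κ ℝ →ₗ[ℝ] ℝ, (∀ p ∈ lmiCone ν κ, 0 ≤ f (kypSlackMap F H w p)) ∧ f M < 0 := by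
  let T := LinearMap.toContinuousLinearMap (kypSlackMap F H w)
  have hinj : ∀ p ∈ lmiCone ν κ, T p = 0 → p = 0 := by
    rintro ⟨Y, X, S⟩ ⟨hY, hX, hS⟩ hzero
    have hS' : S = -kypOperator F H w Y X := eq_neg_of_add_eq_zero_left hzero
    obtain ⟨rfl, rfl⟩ := hnondeg Y X hY hX (hS' ▸ hS)
    simp [hS', kypOperator]
  have hnotMem : M ∉ T '' lmiCone ν κ := by
    rintro ⟨⟨Y, X, S⟩, ⟨hY, hX, hS⟩, rfl⟩
    exact hM ⟨Y, X, hY, hX, by simpa [T, kypSlackMap] using hS⟩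
  obtain ⟨f, hf, hfM⟩ := exists_dual_nonneg_of_notMem_image T (lmiCone ν κ) hinj hnotMem
  exact ⟨f.toLinearMap, hf, hfM⟩

theorem exists_gram_certificate_of_kyp_infeasible {F H : Matrix κ ν ℝ} {w : ℝ}
    {M : Matrix κ κ ℝ} (hMsymm : M.IsSymm)
    (hnondeg : ∀ Y X : Matrix ν ν ℝ, Y.IsSymm → X.PosSemidef →
      (-kypOperator F H w Y X).PosSemidef → Y = 0 ∧ X = 0)
    (hM : ¬∃ Y X : Matrix ν ν ℝ, Y.IsSymm ∧ X.PosSemidef ∧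
      (M - kypOperator F H w Y X).PosSemidef) :
    ∃ G : Matrix κ κ ℝ, (G * H)ᵀ * (G * F) + (G * F)ᵀ * (G * H) = 0 ∧
      (w ^ 2 • ((G * H)ᵀ * (G * H)) - (G * F)ᵀ * (G * F)).PosSemidef ∧
      (Gᵀ * G * M).trace < 0 := by
  classical
  obtain ⟨f, hf, hfM⟩ := exists_functional_of_kyp_infeasible hnondeg hM
  obtain ⟨Z, hZ, hfZ⟩ := exists_posSemidef_trace_mul_eq f fun S hS => by
    simpa [kypSlackMap, kypOperator] using hf (0, 0, S) ⟨isSymm_zero, .zero, hS⟩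
  obtain ⟨G, rfl⟩ := exists_eq_conjTranspose_mul_self hZ
  rw [conjTranspose_eq_transpose_of_trivial] at hfZ
  have hnonneg (Y X : Matrix ν ν ℝ) (hY : Y.IsSymm) (hX : X.PosSemidef) :
      0 ≤ (Gᵀ * G * kypOperator F H w Y X).trace := by
    rw [← hfZ _ (isSymm_kypOperator F H w hY (isHermitian_iff_isSymm.1 hX.isHermitian))]
    simpa [kypSlackMap] using hf (Y, X, 0) ⟨hY, hX, .zero⟩
  simp only [trace_transpose_mul_self_mul_kypOperator] at hnonneg
  refine ⟨G, eq_zero_of_forall_trace_mul_nonneg ?_ fun Y hY => ?_,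
    posSemidef_of_forall_trace_mul_nonneg ?_ fun X hX => ?_, hfZ M hMsymm ▸ hfM⟩
  · simp [IsSymm, add_comm]
  · simpa using hnonneg Y 0 hY .zero
  · simp [IsSymm]
  · simpa using hnonneg 0 X isSymm_zero hX

theorem trace_transpose_mul_self_mul_eq_sum [Fintype ι] [DecidableEq κ] (G M : Matrix κ κ ℝ)
    {T : Matrix ι κ ℂ} (hT : Tᴴ * T = 1) :
    (Gᵀ * G * M).trace = ∑ i, ((T * G.map ofReal) i ⬝ᵥ
      M.map ofReal *ᵥ star ((T * G.map ofReal) i)).re := by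
  have hcomplex : ((Gᵀ * G * M).map ofReal).trace =
      (T * G.map ofReal * M.map ofReal * (T * G.map ofReal)ᴴ).trace := by
    rw [trace_mul_comm, conjTranspose_mul, ← Matrix.mul_assoc, ← Matrix.mul_assoc,
      Matrix.mul_assoc _ Tᴴ, hT, Matrix.mul_one, conjTranspose_map_ofReal, map_ofReal_mul,
      map_ofReal_mul]
  calc (Gᵀ * G * M).trace = (((Gᵀ * G * M).map ofReal).trace).re := by
        simp [trace, Complex.re_sum]
    _ = _ := by
        rw [hcomplex, trace, Complex.re_sum]
        refine Finset.sum_congr rfl fun i _ => ?_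
        rw [diag_apply, Matrix.mul_assoc]
        rfl

theorem exists_kyp_of_frequency_nonneg {F H : Matrix κ ν ℝ} {w : ℝ}
    (hw : 0 < w) {M : Matrix κ κ ℝ} (hM : M.IsSymm)
    (hnondeg : ∀ Y X : Matrix ν ν ℝ, Y.IsSymm → X.PosSemidef →
      (-kypOperator F H w Y X).PosSemidef → Y = 0 ∧ X = 0)
    (hfreq : ∀ (σ : ℝ) (g : κ → ℂ), |σ| ≤ w →
      g ᵥ* F.map ofReal = (I * σ) • (g ᵥ* H.map ofReal) →
      0 ≤ (g ⬝ᵥ M.map ofReal *ᵥ star g).re) :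
    ∃ Y X : Matrix ν ν ℝ, Y.IsSymm ∧ X.PosSemidef ∧ (M - kypOperator F H w Y X).PosSemidef := by
  classical
  by_contra hinfeasible
  obtain ⟨G, hskew, hcontr, hneg⟩ :=
    exists_gram_certificate_of_kyp_infeasible hM hnondeg hinfeasible
  obtain ⟨T, σ, hT, hσ, hTσ⟩ := exists_isometry_mul_eq_diagonal_mul hw
    ((G * F).map ofReal) ((G * H).map ofReal)
    (by
      simp only [conjTranspose_map_ofReal, ← map_ofReal_mul]
      rw [← Matrix.map_add _ Complex.ofReal_add, hskew, Matrix.map_zero _ Complex.ofReal_zero])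
    (by
      convert posSemidef_map_ofReal hcontr using 1
      simp only [conjTranspose_map_ofReal, ← map_ofReal_mul]
      ext i j
      simp)
  refine hneg.not_ge ?_
  rw [trace_transpose_mul_self_mul_eq_sum G M hT]
  refine Finset.sum_nonneg fun i _ => hfreq (σ i) _ (hσ i) ?_
  have hrow (R : Matrix κ ν ℝ) :
      (T * G.map ofReal) i ᵥ* R.map ofReal = (T * (G * R).map ofReal) i := by
    rw [map_ofReal_mul, ← Matrix.mul_assoc]
    exact (mul_apply_eq_vecMul _ _ i).symm
  ext j
  rw [hrow, hrow, hTσ, diagonal_mul, Pi.smul_apply, smul_eq_mul]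

end FrequencyDuality

section Observability

variable {ν μ 𝕜 : Type*} [Fintype ν] [Field 𝕜]

/-- Observability of `(A, C)` in invariant-subspace form: the row space of the observability
matrix, i.e. the smallest subspace of row vectors that contains the rows of `C` and is invariant
under `A`, is everything. -/
def IsObservable (A : Matrix ν ν 𝕜) (C : Matrix μ ν 𝕜) : Prop :=
  ∀ N : Submodule 𝕜 (ν → 𝕜), (∀ i, C i ∈ N) → (∀ y ∈ N, y ᵥ* A ∈ N) → N = ⊤

theorem isObservable_of_rank_eq {n : ℕ} [Finite μ] {A : Matrix (Fin n) (Fin n) 𝕜}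
    {C : Matrix μ (Fin n) 𝕜}
    (hrank : (of fun (p : Fin n × μ) (i : Fin n) => (C * A ^ (p.1 : ℕ)) p.2 i).rank = n) :
    IsObservable A C := by
  intro N hC hA
  rw [rank_eq_finrank_span_row] at hrank
  have hspan := Submodule.eq_top_of_finrank_eq (hrank.trans (Module.finrank_fin_fun 𝕜).symm)
  rw [eq_top_iff, ← hspan, Submodule.span_le]
  have hpow (k : ℕ) (j : μ) : (C * A ^ k) j ∈ N := by
    induction k with
    | zero => simpa using hC j
    | succ k ih =>
      rw [pow_succ, ← Matrix.mul_assoc, mul_apply_eq_vecMul]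
      exact hA _ ih
  rintro _ ⟨p, rfl⟩
  exact hpow p.1 p.2

theorem IsObservable.eq_zero_of_mulVec_eq_smul {𝕃 : Type*} [CommRing 𝕃] [Algebra 𝕜 𝕃]
    {A : Matrix ν ν 𝕜} {C : Matrix μ ν 𝕜} (hobs : IsObservable A C) {z : 𝕃} {x : ν → 𝕃}
    (hA : A.map (algebraMap 𝕜 𝕃) *ᵥ x = z • x) (hC : C.map (algebraMap 𝕜 𝕃) *ᵥ x = 0) :
    x = 0 := by
  classical
  have hrow (y : ν → 𝕜) :
      Fintype.linearCombination 𝕜 x y = (fun i => algebraMap 𝕜 𝕃 (y i)) ⬝ᵥ x := by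
    simp [Fintype.linearCombination_apply, dotProduct, Algebra.smul_def]
  have hker : (Fintype.linearCombination 𝕜 x).ker = ⊤ := by
    refine hobs _ (fun i => ?_) fun y hy => ?_
    · rw [LinearMap.mem_ker, hrow]
      exact congrFun hC i
    · rw [LinearMap.mem_ker, hrow] at hy ⊢
      have hyA : (fun i => algebraMap 𝕜 𝕃 ((y ᵥ* A) i)) =
          (fun i => algebraMap 𝕜 𝕃 (y i)) ᵥ* A.map (algebraMap 𝕜 𝕃) :=
        funext fun i => RingHom.map_vecMul _ A y i
      rw [hyA, ← dotProduct_mulVec, hA, dotProduct_smul, hy, smul_zero]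
  ext i
  have hsingle : Pi.single i 1 ∈ (Fintype.linearCombination 𝕜 x).ker := hker ▸ Submodule.mem_top
  simpa [Fintype.linearCombination_apply_single] using hsingle

end Observability

section Certificate

variable {ν μ : Type*} [Fintype ν] {A Y X : Matrix ν ν ℝ} {B : Matrix ν μ ℝ} {C : Matrix μ ν ℝ}
  {w : ℝ}

/-- `(Y, X)` solves the linear matrix inequality of the finite frequency negative imaginary lemma
for the band `(0, w]`. -/
def IsNICertificate (A : Matrix ν ν ℝ) (B : Matrix ν μ ℝ) (C : Matrix μ ν ℝ) (w : ℝ)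
    (Y X : Matrix ν ν ℝ) : Prop :=
  Y.IsSymm ∧ X.PosSemidef ∧ (-(A * Y + Y * Aᵀ - A * X * Aᵀ + (w ^ 2) • X)).PosSemidef ∧
    B + A * Y * Cᵀ = 0 ∧ C * X = 0

theorem mulVec_eq_zero_of_mulVec_vecMul_eq_zero [DecidableEq ν] (hA : IsUnit A.det) (hw : w ≠ 0)
    (hY : Y.IsSymm) (hX : X.PosSemidef)
    (hlmi : (-(A * Y + Y * Aᵀ - A * X * Aᵀ + (w ^ 2) • X)).PosSemidef) {z : ν → ℝ}
    (hYz : Y *ᵥ (z ᵥ* A) = 0) (hXz : X *ᵥ (z ᵥ* A) = 0) : Y *ᵥ z = 0 ∧ X *ᵥ z = 0 := by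
  rw [← mulVec_transpose] at hYz hXz
  have hlmi_z : (-(A * Y + Y * Aᵀ - A * X * Aᵀ + (w ^ 2) • X)) *ᵥ z =
      -(A *ᵥ (Y *ᵥ z)) - w ^ 2 • (X *ᵥ z) := by
    simp only [neg_mulVec, add_mulVec, sub_mulVec, ← mulVec_mulVec, hYz, hXz, smul_mulVec,
      mulVec_zero]
    abel
  have hzero : z ⬝ᵥ A *ᵥ (Y *ᵥ z) = 0 := by
    rw [dotProduct_mulVec, dotProduct_mulVec, ← mulVec_transpose Y, hY.eq, ← mulVec_transpose, hYz,
      zero_dotProduct]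
  have hquad : z ⬝ᵥ (-(A * Y + Y * Aᵀ - A * X * Aᵀ + (w ^ 2) • X)) *ᵥ z =
      -(w ^ 2 * (z ⬝ᵥ X *ᵥ z)) := by
    rw [hlmi_z, dotProduct_sub, dotProduct_neg, hzero, dotProduct_smul, smul_eq_mul, neg_zero,
      zero_sub]
  have hXquad : z ⬝ᵥ X *ᵥ z = 0 := by
    refine le_antisymm ?_ (hX.dotProduct_mulVec_nonneg z)
    have hle : 0 ≤ -(w ^ 2 * (z ⬝ᵥ X *ᵥ z)) := hquad ▸ hlmi.dotProduct_mulVec_nonneg z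
    exact nonpos_of_mul_nonpos_right (neg_nonneg.1 hle) (by positivity)
  have hXz' : X *ᵥ z = 0 := (hX.dotProduct_mulVec_zero_iff z).1 hXquad
  have hAYz : A *ᵥ (Y *ᵥ z) = 0 := by
    have h := (hlmi.dotProduct_mulVec_zero_iff z).1 (hquad.trans (by rw [hXquad]; simp))
    rwa [hlmi_z, hXz', smul_zero, sub_zero, neg_eq_zero] at h
  exact ⟨eq_zero_of_mulVec_eq_zero hA.ne_zero hAYz, hXz'⟩

-- The common kernel of `Y` and `X` is invariant under the inverse of `z ↦ z A`, hence under
-- `z ↦ z A` itself by a dimension count, and it contains the rows of `C`.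
theorem IsNICertificate.eq_zero_of_isObservable [DecidableEq ν] (hA : IsUnit A.det)
    (hobs : IsObservable A C) (hw : w ≠ 0)
    (hcert : IsNICertificate A (0 : Matrix ν μ ℝ) C w Y X) : Y = 0 ∧ X = 0 := by
  obtain ⟨hY, hX, hlmi, hYC, hCX⟩ := hcert
  have hX' : Xᵀ = X := (isHermitian_iff_isSymm.1 hX.isHermitian).eq
  let N : Submodule ℝ (ν → ℝ) := Y.mulVecLin.ker ⊓ X.mulVecLin.ker
  let e := LinearEquiv.ofInjectiveEndo A.vecMulLinear
    (vecMul_injective_of_isUnit (A.isUnit_iff_isUnit_det.2 hA))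
  have hle : N.comap (e : (ν → ℝ) →ₗ[ℝ] ν → ℝ) ≤ N := fun z hz =>
    mulVec_eq_zero_of_mulVec_vecMul_eq_zero hA hw hY hX hlmi hz.1 hz.2
  have hcomap : N.comap (e : (ν → ℝ) →ₗ[ℝ] ν → ℝ) = N :=
    Submodule.eq_of_le_of_finrank_eq hle (e.ofSubmodule' N).finrank_eq
  have htop : N = ⊤ := by
    refine hobs N (fun i => ⟨?_, ?_⟩) fun y hy => hcomap.ge hy
    · have hAY : A *ᵥ (Y *ᵥ C i) = 0 := by
        rw [zero_add] at hYC
        rw [mulVec_mulVec]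
        exact funext fun k => congrFun₂ hYC k i
      exact eq_zero_of_mulVec_eq_zero hA.ne_zero hAY
    · have hXC : X *ᵥ C i = 0 := by
        rw [← hX', mulVec_transpose]
        exact congrFun hCX i
      exact hXC
  have hmem (z : ν → ℝ) : z ∈ N := htop ▸ Submodule.mem_top
  exact ⟨ext_of_mulVec_single fun j => (hmem _).1.trans (zero_mulVec _).symm,
    ext_of_mulVec_single fun j => (hmem _).2.trans (zero_mulVec _).symm⟩

theorem fromBlocks_sub_kypOperator [DecidableEq ν] (A : Matrix ν ν ℝ) (B : Matrix ν μ ℝ)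
    (C : Matrix μ ν ℝ) (w : ℝ) (Y X : Matrix ν ν ℝ) :
    fromBlocks 0 B Bᵀ 0 - kypOperator (fromRows A 0) (fromRows 1 (-C)) w Y X =
      fromBlocks (-(A * Y + Y * Aᵀ - A * X * Aᵀ + w ^ 2 • X))
        (B + A * Y * Cᵀ + w ^ 2 • (X * Cᵀ)) (Bᵀ + C * Y * Aᵀ + w ^ 2 • (C * X))
        (-(w ^ 2 • (C * X * Cᵀ))) := by
  simp only [kypOperator, transpose_fromRows, fromRows_mul, mul_fromCols]
  ext (i | i) (j | j) <;> simp <;> ring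

theorem isNICertificate_of_posSemidef_sub_kypOperator [Finite μ] [DecidableEq ν] (hw : w ≠ 0)
    (hY : Y.IsSymm) (hX : X.PosSemidef)
    (h : (fromBlocks 0 B Bᵀ 0 -
      kypOperator (fromRows A 0) (fromRows 1 (-C)) w Y X).PosSemidef) :
    IsNICertificate A B C w Y X := by
  rw [fromBlocks_sub_kypOperator] at h
  have hlmi : (-(A * Y + Y * Aᵀ - A * X * Aᵀ + w ^ 2 • X)).PosSemidef := h.submatrix Sum.inl
  have hCXC : (-(C * X * Cᴴ)).PosSemidef := by
    have hscaled : (-(w ^ 2 • (C * X * Cᵀ))).PosSemidef := h.submatrix Sum.inr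
    have h' := hscaled.smul (inv_nonneg.2 (sq_nonneg w))
    rwa [smul_neg, inv_smul_smul₀ (pow_ne_zero 2 hw)] at h'
  have hXC : X * Cᵀ = 0 := mul_conjTranspose_eq_zero_of_posSemidef_neg hX hCXC
  have hCX : C * X = 0 := by
    simpa [(isHermitian_iff_isSymm.1 hX.isHermitian).eq] using congrArg transpose hXC
  refine ⟨hY, hX, hlmi, ?_, hCX⟩
  rw [hCX, hXC, Matrix.zero_mul, smul_zero, smul_zero, smul_zero, neg_zero, add_zero] at h
  exact fromBlocks_zero₂₂_eq_zero_of_posSemidef h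

theorem re_dotProduct_fromBlocks_mulVec_star [Fintype μ] (B : Matrix ν μ ℝ) (v : ν → ℂ)
    (u : μ → ℂ) :
    (Sum.elim v u ⬝ᵥ (fromBlocks 0 B Bᵀ 0).map ofReal *ᵥ star (Sum.elim v u)).re =
      2 * (v ⬝ᵥ B.map ofReal *ᵥ star u).re := by
  have hconj : u ⬝ᵥ Bᵀ.map ofReal *ᵥ star v = star (v ⬝ᵥ B.map ofReal *ᵥ star u) := by
    rw [← conjTranspose_map_ofReal, ← star_dotProduct_star, star_mulVec, star_star,
      ← dotProduct_mulVec]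
  have hstar : star (Sum.elim v u) = Sum.elim (star v) (star u) := by
    ext (i | i) <;> rfl
  rw [fromBlocks_map, hstar, fromBlocks_mulVec, sumElim_dotProduct_sumElim]
  simp [hconj, two_mul]

theorem exists_isNICertificate_of_frequency_nonneg [Fintype μ] [DecidableEq ν]
    (hA : IsUnit A.det) (hobs : IsObservable A C) (hw : 0 < w)
    (hfreq : ∀ (σ : ℝ) (v : ν → ℂ) (u : μ → ℂ), |σ| ≤ w →
      v ᵥ* A.map ofReal = (I * σ) • (v - u ᵥ* C.map ofReal) →
      0 ≤ (v ⬝ᵥ B.map ofReal *ᵥ star u).re) :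
    ∃ Y X : Matrix ν ν ℝ, IsNICertificate A B C w Y X := by
  have hcert {B' : Matrix ν μ ℝ} {Y X : Matrix ν ν ℝ} :=
    isNICertificate_of_posSemidef_sub_kypOperator (A := A) (B := B') (C := C) (Y := Y) (X := X)
      hw.ne'
  have hrow (σ : ℝ) (g : ν ⊕ μ → ℂ) (hσ : |σ| ≤ w) (hg : g ᵥ* (fromRows A 0).map ofReal =
      (I * σ) • (g ᵥ* (fromRows 1 (-C)).map ofReal)) :
      0 ≤ (g ⬝ᵥ (fromBlocks 0 B Bᵀ 0).map ofReal *ᵥ star g).re := by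
    obtain ⟨v, u, rfl⟩ : ∃ v u, g = Sum.elim v u := ⟨_, _, (Sum.elim_comp_inl_inr g).symm⟩
    rw [re_dotProduct_fromBlocks_mulVec_star]
    refine mul_nonneg two_pos.le (hfreq σ v u hσ ?_)
    have hneg : (-C).map ofReal = -C.map ofReal := Matrix.map_neg _ Complex.ofReal_neg _
    simpa [fromRows_map, hneg, vecMul_neg, sub_eq_add_neg] using hg
  obtain ⟨Y, X, hY, hX, h⟩ := exists_kyp_of_frequency_nonneg hw
    (by simp [IsSymm, fromBlocks_transpose])
    (fun Y X hY hX h => (hcert (B' := 0) hY hX (by simpa using h)).eq_zero_of_isObservable hA hobs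
      hw.ne') hrow
  exact ⟨Y, X, hcert hY hX h⟩

end Certificate

section Resolvent

variable {ν : Type*} [Fintype ν] [DecidableEq ν] {a P : Matrix ν ν ℂ} {z : ℂ}

theorem isUnit_det_smul_one_sub {s : ℂ} (hs : s ∉ spectrum ℂ a) :
    IsUnit (s • (1 : Matrix ν ν ℂ) - a).det := by
  rw [spectrum.notMem_iff, Algebra.algebraMap_eq_smul_one] at hs
  exact (isUnit_iff_isUnit_det _).1 hs

theorem smul_one_sub_mul_inv {s : ℂ} (hs : s ∉ spectrum ℂ a) (z : ℂ) :
    (z • 1 - a) * (s • (1 : Matrix ν ν ℂ) - a)⁻¹ = 1 - (s - z) • (s • 1 - a)⁻¹ := by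
  have hsplit : z • 1 - a = (s • 1 - a) - (s - z) • (1 : Matrix ν ν ℂ) := by
    rw [sub_smul]
    abel
  rw [hsplit, Matrix.sub_mul, mul_nonsing_inv _ (isUnit_det_smul_one_sub hs), smul_mul,
    Matrix.one_mul]

theorem eventually_notMem_spectrum (a : Matrix ν ν ℂ) (z : ℂ) :
    ∀ᶠ s in 𝓝[≠] z, s ∉ spectrum ℂ a :=
  nhdsNE_le_cofinite z (finite_spectrum a).compl_mem_cofinite

theorem tendsto_sub_nhdsNE_zero (z : ℂ) : Tendsto (fun s : ℂ => s - z) (𝓝[≠] z) (𝓝 0) :=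
  tendsto_nhdsWithin_of_tendsto_nhds (sub_self z ▸ (continuous_sub_right z).tendsto z)

/-- `P` is the limit of `(s - z)(sI - a)⁻¹` as `s → z`: the point `z` is at most a simple pole of
the resolvent of `a`, with residue `P`. -/
def IsResolventResidue (a : Matrix ν ν ℂ) (z : ℂ) (P : Matrix ν ν ℂ) : Prop :=
  Tendsto (fun s : ℂ => (s - z) • (s • (1 : Matrix ν ν ℂ) - a)⁻¹) (𝓝[≠] z) (𝓝 P)

namespace IsResolventResidue

theorem tendsto_mul_resolvent (hP : IsResolventResidue a z P) :
    Tendsto (fun s : ℂ => (z • 1 - a) * (s • (1 : Matrix ν ν ℂ) - a)⁻¹) (𝓝[≠] z)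
      (𝓝 (1 - P)) := by
  refine (hP.const_sub 1).congr' ?_
  filter_upwards [eventually_notMem_spectrum a z] with s hs
  rw [smul_one_sub_mul_inv hs]

theorem smul_one_sub_mul_eq_zero (hP : IsResolventResidue a z P) : (z • 1 - a) * P = 0 := by
  have hlim := (tendsto_sub_nhdsNE_zero z).smul hP.tendsto_mul_resolvent
  rw [zero_smul] at hlim
  refine tendsto_nhds_unique (hP.const_mul (z • 1 - a)) (hlim.congr fun s => ?_)
  rw [Matrix.mul_smul]

theorem mul_eq_smul (hP : IsResolventResidue a z P) : a * P = z • P := by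
  have h := hP.smul_one_sub_mul_eq_zero
  rw [Matrix.sub_mul, smul_mul, Matrix.one_mul, sub_eq_zero] at h
  exact h.symm

end IsResolventResidue

end Resolvent

section TransferFunction

variable {n m : ℕ} {A : Matrix (Fin n) (Fin n) ℝ} {B : Matrix (Fin n) (Fin m) ℝ}
  {C : Matrix (Fin m) (Fin n) ℝ} {D : Matrix (Fin m) (Fin m) ℝ} {P : Matrix (Fin n) (Fin n) ℂ}

theorem zero_mem_eigs_iff : 0 ∈ eigs A ↔ A.det = 0 := by
  rw [eigs, spectrum.zero_mem_iff, isUnit_iff_isUnit_det, isUnit_iff_ne_zero, not_not,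
    det_map_ofReal, Complex.ofReal_eq_zero]

theorem tf_sub_conjTranspose (hD : D = Dᵀ) (s : ℂ) :
    tf A B C D s - (tf A B C D s)ᴴ =
      C.map ofReal * (s • 1 - A.map ofReal)⁻¹ * B.map ofReal -
        (C.map ofReal * (s • 1 - A.map ofReal)⁻¹ * B.map ofReal)ᴴ := by
  rw [tf, conjTranspose_add, conjTranspose_map_ofReal D, ← hD, add_sub_add_right_eq_sub]

theorem tendsto_smul_tf {z : ℂ} (hP : IsResolventResidue (A.map ofReal) z P) :
    Tendsto (fun s : ℂ => (s - z) • I • tf A B C D s) (𝓝[≠] z)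
      (𝓝 (I • (C.map ofReal * P * B.map ofReal))) := by
  have hcont : Continuous fun M : Matrix (Fin n) (Fin n) ℂ =>
      I • (C.map ofReal * M * B.map ofReal) := by fun_prop
  have hlim := ((hcont.tendsto P).comp hP).add
    ((tendsto_sub_nhdsNE_zero z).smul (tendsto_const_nhds (x := I • D.map ofReal)))
  rw [zero_smul, add_zero] at hlim
  refine hlim.congr fun s => ?_
  simp only [Function.comp_apply, tf, smul_add, Matrix.mul_smul, smul_mul]
  rw [smul_comm I]

theorem exists_tendsto_smul_tf_posSemidef_iff {ω : ℝ} (hω : 0 < ω)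
    (hP : IsResolventResidue (A.map ofReal) (I * ω) P) :
    (∃ K : Matrix (Fin m) (Fin m) ℂ, Tendsto (fun s : ℂ => (s - I * ω) • I • tf A B C D s)
      (𝓝[≠] (I * ω)) (𝓝 K) ∧ K.PosSemidef) ↔
    ((C * A).map ofReal * P * B.map ofReal).PosSemidef := by
  have hCA : (C * A).map ofReal * P * B.map ofReal =
      (ω : ℂ) • I • (C.map ofReal * P * B.map ofReal) := by
    rw [map_ofReal_mul, Matrix.mul_assoc (C.map ofReal), hP.mul_eq_smul, Matrix.mul_smul, smul_mul,
      smul_smul, mul_comm]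
  have hω' : (0 : ℂ) < ω := by exact_mod_cast hω
  rw [hCA]
  constructor
  · rintro ⟨K, hK, hKpos⟩
    exact tendsto_nhds_unique hK (tendsto_smul_tf hP) ▸ hKpos.smul hω'.le
  · intro h
    refine ⟨_, tendsto_smul_tf hP, ?_⟩
    simpa only [inv_smul_smul₀ hω'.ne'] using h.smul (inv_nonneg.2 hω'.le)

end TransferFunction

section FrequencyInequality

variable {ν μ : Type*} [Fintype ν] [Fintype μ]

theorem im_dotProduct_mulVec_nonpos {R : Matrix μ μ ℂ} (h : (I • (R - Rᴴ)).PosSemidef)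
    (x : μ → ℂ) : (star x ⬝ᵥ R *ᵥ x).im ≤ 0 := by
  have hconj : star x ⬝ᵥ Rᴴ *ᵥ x = star (star x ⬝ᵥ R *ᵥ x) := by
    rw [← star_dotProduct_star, star_star, star_mulVec, ← dotProduct_mulVec]
  have hre := (Complex.nonneg_iff.1 (h.dotProduct_mulVec_nonneg x)).1
  rw [smul_mulVec, dotProduct_smul, sub_mulVec, dotProduct_sub, hconj] at hre
  have hrot (q : ℂ) : (I * (q - star q)).re = -2 * q.im := by
    simp
    ring
  rw [smul_eq_mul, hrot] at hre
  linarith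

variable [DecidableEq ν]

theorem mul_dotProduct_mulVec_of_vecMul_eq {R : Type*} [CommRing R] {a : Matrix ν ν R}
    {c : Matrix μ ν R} {z : R} {v : ν → R} {u : μ → R} (hv : v ᵥ* a = z • (v - u ᵥ* c))
    (M : Matrix ν ν R) (b : Matrix ν μ R) (x : μ → R) :
    z * (u ⬝ᵥ (c * M * b) *ᵥ x) = v ⬝ᵥ ((z • 1 - a) * M) *ᵥ (b *ᵥ x) := by
  have hv' : v ᵥ* (z • 1 - a) = z • (u ᵥ* c) := by
    rw [vecMul_sub, hv, vecMul_smul, vecMul_one, smul_sub]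
    abel
  rw [dotProduct_mulVec v, ← vecMul_vecMul, hv', smul_vecMul, smul_dotProduct, smul_eq_mul,
    vecMul_vecMul, dotProduct_mulVec, dotProduct_mulVec, vecMul_vecMul]

variable {a P : Matrix ν ν ℂ} {b : Matrix ν μ ℂ} {c : Matrix μ ν ℂ} {ω : ℝ} {v : ν → ℂ} {u : μ → ℂ}

theorem re_dotProduct_mul_mulVec_nonneg {M : Matrix ν ν ℂ} (hω : 0 ≤ ω)
    (hM : (I • (c * M * b - (c * M * b)ᴴ)).PosSemidef)
    (hv : v ᵥ* a = (I * ω) • (v - u ᵥ* c)) :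
    0 ≤ (v ⬝ᵥ (((I * ω) • 1 - a) * M) *ᵥ (b *ᵥ star u)).re := by
  have him := im_dotProduct_mulVec_nonpos hM (star u)
  rw [star_star] at him
  rw [← mul_dotProduct_mulVec_of_vecMul_eq hv, mul_comm I, mul_assoc, Complex.re_ofReal_mul,
    Complex.I_mul_re]
  exact mul_nonneg hω (neg_nonneg.2 him)

theorem tendsto_I_mul_ofReal_nhdsNE (ω : ℝ) :
    Tendsto (fun x : ℝ => I * x) (𝓝[≠] ω) (𝓝[≠] (I * ω)) := by
  have hinj : Function.Injective fun x : ℝ => I * x :=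
    (mul_right_injective₀ Complex.I_ne_zero).comp Complex.ofReal_injective
  have hcont : Continuous fun x : ℝ => I * x := by fun_prop
  exact hcont.continuousWithinAt.tendsto_nhdsWithin fun _ => hinj.ne

theorem IsResolventResidue.re_dotProduct_one_sub_mulVec_nonneg (hω : 0 ≤ ω)
    (hP : IsResolventResidue a (I * ω) P)
    (hpsd : ∀ᶠ x : ℝ in 𝓝[<] ω, (I • (c * ((I * x) • 1 - a)⁻¹ * b -
      (c * ((I * x) • 1 - a)⁻¹ * b)ᴴ)).PosSemidef)
    (hv : v ᵥ* a = (I * ω) • (v - u ᵥ* c)) :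
    0 ≤ (v ⬝ᵥ (1 - P) *ᵥ (b *ᵥ star u)).re := by
  have hcont : Continuous fun M : Matrix ν ν ℂ => (v ⬝ᵥ M *ᵥ (b *ᵥ star u)).re := by fun_prop
  have hline : Tendsto (fun x : ℝ => I * x) (𝓝[<] ω) (𝓝[≠] (I * ω)) :=
    (tendsto_I_mul_ofReal_nhdsNE ω).mono_left (nhdsWithin_mono ω fun _ hx => ne_of_lt hx)
  refine ge_of_tendsto ((hcont.tendsto _).comp (hP.tendsto_mul_resolvent.comp hline)) ?_
  filter_upwards [hpsd] with x hx using re_dotProduct_mul_mulVec_nonneg hω hx hv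

theorem IsObservable.residue_mulVec_eq_zero {A : Matrix ν ν ℝ} {C : Matrix μ ν ℝ}
    (hobs : IsObservable A C) {z : ℂ} (hz : z ≠ 0) (hP : IsResolventResidue (A.map ofReal) z P)
    (hherm : (I • (C.map ofReal * P * b)).IsHermitian)
    (hv : v ᵥ* A.map ofReal = z • (v - u ᵥ* C.map ofReal)) : P *ᵥ (b *ᵥ star u) = 0 := by
  set K := I • (C.map ofReal * P * b)
  have huK : u ᵥ* K = 0 := by
    refine dotProduct_eq_zero _ fun x => ?_
    have hres := mul_dotProduct_mulVec_of_vecMul_eq hv P b x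
    rw [hP.smul_one_sub_mul_eq_zero, zero_mulVec, dotProduct_zero] at hres
    rw [← dotProduct_mulVec, smul_mulVec, dotProduct_smul,
      (mul_eq_zero.1 hres).resolve_left hz, smul_zero]
  have hKu : K *ᵥ star u = 0 := by
    rw [← hherm.eq, ← star_vecMul, huK, star_zero]
  refine hobs.eq_zero_of_mulVec_eq_smul (𝕃 := ℂ) (z := z) ?_ ?_
  · exact (mulVec_mulVec ..).trans ((congrArg (· *ᵥ _) hP.mul_eq_smul).trans (smul_mulVec ..))
  · have hCPb := (smul_eq_zero.1 ((smul_mulVec ..).symm.trans hKu)).resolve_left Complex.I_ne_zero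
    rwa [← mulVec_mulVec, ← mulVec_mulVec] at hCPb

end FrequencyInequality

section FiniteFrequency

variable {n m : ℕ} {A : Matrix (Fin n) (Fin n) ℝ} {B : Matrix (Fin n) (Fin m) ℝ}
  {C : Matrix (Fin m) (Fin n) ℝ} {D : Matrix (Fin m) (Fin m) ℝ} {w : ℝ}

theorem IsFFNI.re_dotProduct_nonneg_of_pos (h : IsFFNI A B C D w) (hobs : IsObservable A C)
    {Φ : ℝ → Matrix (Fin n) (Fin n) ℂ}
    (hΦ : ∀ ω : ℝ, 0 < ω → ω ≤ w → I * ω ∈ eigs A →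
      IsResolventResidue (A.map ofReal) (I * ω) (Φ ω))
    {ω : ℝ} (hω : 0 < ω) (hωw : ω ≤ w) {v : Fin n → ℂ} {u : Fin m → ℂ}
    (hv : v ᵥ* A.map ofReal = (I * ω) • (v - u ᵥ* C.map ofReal)) :
    0 ≤ (v ⬝ᵥ B.map ofReal *ᵥ star u).re := by
  obtain ⟨-, hreg, hpole, hD⟩ := h
  have hpsd (x : ℝ) (hx : 0 < x) (hxw : x ≤ w) (hxA : I * x ∉ eigs A) :=
    tf_sub_conjTranspose (A := A) (B := B) (C := C) hD (I * x) ▸ hreg x hx hxw hxA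
  by_cases hmem : I * ω ∈ eigs A
  · have hP := hΦ ω hω hωw hmem
    obtain ⟨K, hK, hKpos⟩ := hpole ω hω hωw hmem
    have hherm := (tendsto_nhds_unique hK (tendsto_smul_tf hP) ▸ hKpos).isHermitian
    have hline : ∀ᶠ x : ℝ in 𝓝[≠] ω, I * x ∉ eigs A :=
      (tendsto_I_mul_ofReal_nhdsNE ω).eventually (eventually_notMem_spectrum _ _)
    have hlim := hP.re_dotProduct_one_sub_mulVec_nonneg (b := B.map ofReal) hω.le (by
      filter_upwards [self_mem_nhdsWithin, nhdsWithin_le_nhds (Ioi_mem_nhds hω),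
        hline.filter_mono (nhdsWithin_mono ω fun _ hx => ne_of_lt hx)] with x hxω hx hxA
      exact hpsd x hx (hxω.le.trans hωw) hxA) hv
    have hres := hobs.residue_mulVec_eq_zero (by simp [hω.ne']) hP hherm hv
    rwa [sub_mulVec, one_mulVec, hres, sub_zero] at hlim
  · have hnonneg := re_dotProduct_mul_mulVec_nonneg hω.le (hpsd ω hω hωw hmem) hv
    rwa [mul_nonsing_inv _ (isUnit_det_smul_one_sub hmem), one_mulVec] at hnonneg

theorem IsFFNI.re_dotProduct_nonneg (h : IsFFNI A B C D w) (hobs : IsObservable A C)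
    {Φ : ℝ → Matrix (Fin n) (Fin n) ℂ}
    (hΦ : ∀ ω : ℝ, 0 < ω → ω ≤ w → I * ω ∈ eigs A →
      IsResolventResidue (A.map ofReal) (I * ω) (Φ ω))
    (σ : ℝ) (v : Fin n → ℂ) (u : Fin m → ℂ) (hσ : |σ| ≤ w)
    (hv : v ᵥ* A.map ofReal = (I * σ) • (v - u ᵥ* C.map ofReal)) :
    0 ≤ (v ⬝ᵥ B.map ofReal *ᵥ star u).re := by
  rcases lt_trichotomy σ 0 with hneg | rfl | hpos
  · have hv' : star v ᵥ* A.map ofReal =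
        (I * ((-σ : ℝ) : ℂ)) • (star v - star u ᵥ* C.map ofReal) := by
      simpa [star_vecMul_map_ofReal] using congrArg star hv
    have hstar : star v ⬝ᵥ B.map ofReal *ᵥ star (star u) =
        star (v ⬝ᵥ B.map ofReal *ᵥ star u) := by
      rw [dotProduct_mulVec, dotProduct_mulVec, ← star_vecMul_map_ofReal, star_dotProduct_star,
        dotProduct_comm]
    have hnonneg := h.re_dotProduct_nonneg_of_pos hobs hΦ (neg_pos.2 hneg)
      (abs_of_neg hneg ▸ hσ) hv'
    rwa [hstar] at hnonneg
  · have hdet : A.det ≠ 0 := fun h0 => (h.1 0 (zero_mem_eigs_iff.2 h0)).1 rfl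
    have hv0 : v = 0 :=
      eq_zero_of_vecMul_eq_zero (M := A.map ofReal) (by simpa [det_map_ofReal] using hdet)
        (by simpa using hv)
    simp [hv0]
  · exact h.re_dotProduct_nonneg_of_pos hobs hΦ hpos (abs_of_pos hpos ▸ hσ) hv

end FiniteFrequency

section Converse

variable {ν μ : Type*} [Fintype ν] {a x y : Matrix ν ν ℂ} {b : Matrix ν μ ℂ}
  {c L : Matrix μ ν ℂ} {ω w : ℝ}

theorem I_smul_mul_sub_conjTranspose_eq (hL : L * a = (I * ω) • L - c)
    (hy : y.IsHermitian) (hb : b = -(a * y * cᴴ)) :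
    I • (L * b - (L * b)ᴴ) = (ω : ℂ) • (L * y * cᴴ + c * y * Lᴴ) := by
  have hLb : L * b = c * y * cᴴ - (I * ω) • (L * y * cᴴ) := by
    rw [hb, Matrix.mul_neg, ← Matrix.mul_assoc, ← Matrix.mul_assoc, hL, Matrix.sub_mul,
      Matrix.sub_mul, smul_mul, smul_mul, neg_sub]
  have hLb_star : (L * b)ᴴ = c * y * cᴴ + (I * ω) • (c * y * Lᴴ) := by
    simp [hLb, conjTranspose_mul, hy.eq, Matrix.mul_assoc]
  rw [hLb_star, hLb]
  calc I • (c * y * cᴴ - (I * ω) • (L * y * cᴴ) - (c * y * cᴴ + (I * ω) • (c * y * Lᴴ)))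
    _ = (-(I * I) * ω) • (L * y * cᴴ + c * y * Lᴴ) := by module
    _ = (ω : ℂ) • (L * y * cᴴ + c * y * Lᴴ) := by rw [Complex.I_mul_I, neg_neg, one_mul]

theorem mul_conjTranspose_add_eq_lmi_congruence (hL : L * a = (I * ω) • L - c) (hcx : c * x = 0)
    (hxc : x * cᴴ = 0) :
    L * y * cᴴ + c * y * Lᴴ =
      L * (-(a * y + y * aᴴ - a * x * aᴴ + ((w : ℂ) ^ 2) • x)) * Lᴴ +
        ((w : ℂ) ^ 2 - ω ^ 2) • (L * x * Lᴴ) := by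
  have haL : aᴴ * Lᴴ = -((I * ω) • Lᴴ) - cᴴ := by
    rw [← conjTranspose_mul, hL]
    simp
  have hay : L * (a * y) * Lᴴ = (I * ω) • (L * y * Lᴴ) - c * y * Lᴴ := by
    rw [← Matrix.mul_assoc, hL, Matrix.sub_mul, Matrix.sub_mul, smul_mul, smul_mul]
  have hya : L * (y * aᴴ) * Lᴴ = -((I * ω) • (L * y * Lᴴ)) - L * y * cᴴ := by
    rw [← Matrix.mul_assoc, Matrix.mul_assoc _ aᴴ, haL, Matrix.mul_sub, Matrix.mul_neg,
      Matrix.mul_smul]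
  have haxa : L * (a * x * aᴴ) * Lᴴ = ((ω : ℂ) ^ 2) • (L * x * Lᴴ) := by
    have hLax : L * (a * x * aᴴ) * Lᴴ = L * a * x * (aᴴ * Lᴴ) := by
      simp only [Matrix.mul_assoc]
    rw [hLax, hL, haL, Matrix.sub_mul, hcx, sub_zero, Matrix.mul_sub, smul_mul, smul_mul,
      smul_mul, Matrix.mul_assoc L x cᴴ, hxc, Matrix.mul_zero, smul_zero, sub_zero, Matrix.mul_neg,
      Matrix.mul_smul, smul_neg, smul_smul, ← neg_smul]
    congr 1
    linear_combination (-(ω : ℂ) ^ 2) * Complex.I_sq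
  rw [Matrix.mul_neg, Matrix.neg_mul, Matrix.mul_add, Matrix.mul_sub, Matrix.mul_add,
    Matrix.add_mul, Matrix.sub_mul, Matrix.add_mul, hay, hya, haxa, Matrix.mul_smul, smul_mul]
  module

end Converse

section Certified

variable {n m : ℕ} {A Y X : Matrix (Fin n) (Fin n) ℝ} {B : Matrix (Fin n) (Fin m) ℝ}
  {C : Matrix (Fin m) (Fin n) ℝ} {D : Matrix (Fin m) (Fin m) ℝ} {w : ℝ}

theorem IsNICertificate.posSemidef_smul_tf_sub (h : IsNICertificate A B C w Y X) (hD : D = Dᵀ)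
    {ω : ℝ} (hω : 0 ≤ ω) (hωw : ω ≤ w) (hmem : I * ω ∉ eigs A) :
    (I • (tf A B C D (I * ω) - (tf A B C D (I * ω))ᴴ)).PosSemidef := by
  obtain ⟨hY, hX, hlmi, hB, hCX⟩ := h
  set L := C.map ofReal * ((I * ω) • 1 - A.map ofReal)⁻¹
  have hL : L * A.map ofReal = (I * ω) • L - C.map ofReal := by
    have hinv := congrArg (C.map ofReal * ·) (nonsing_inv_mul _ (isUnit_det_smul_one_sub hmem))
    simp only [← Matrix.mul_assoc, Matrix.mul_sub, Matrix.mul_smul, Matrix.mul_one] at hinv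
    rw [← hinv]
    abel
  have hy : (Y.map ofReal).IsHermitian := by rw [IsHermitian, conjTranspose_map_ofReal, hY.eq]
  have hb : B.map ofReal = -(A.map ofReal * Y.map ofReal * (C.map ofReal)ᴴ) := by
    rw [eq_neg_of_add_eq_zero_left hB, conjTranspose_map_ofReal, ← map_ofReal_mul,
      ← map_ofReal_mul]
    exact Matrix.map_neg _ Complex.ofReal_neg _
  have hcx : C.map ofReal * X.map ofReal = 0 := by
    rw [← map_ofReal_mul, hCX]
    exact Matrix.map_zero _ Complex.ofReal_zero
  have hxc : X.map ofReal * (C.map ofReal)ᴴ = 0 := by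
    simpa [(posSemidef_map_ofReal hX).isHermitian.eq] using congrArg conjTranspose hcx
  have hlmi_map : (-(A * Y + Y * Aᵀ - A * X * Aᵀ + w ^ 2 • X)).map ofReal =
      -(A.map ofReal * Y.map ofReal + Y.map ofReal * (A.map ofReal)ᴴ -
        A.map ofReal * X.map ofReal * (A.map ofReal)ᴴ + (w : ℂ) ^ 2 • X.map ofReal) := by
    simp only [conjTranspose_map_ofReal, ← map_ofReal_mul]
    ext i j
    simp
  have hscale : (0 : ℂ) ≤ (w : ℂ) ^ 2 - ω ^ 2 := by
    exact_mod_cast sub_nonneg.2 (pow_le_pow_left₀ hω hωw 2)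
  rw [tf_sub_conjTranspose hD, I_smul_mul_sub_conjTranspose_eq hL hy hb,
    mul_conjTranspose_add_eq_lmi_congruence hL hcx hxc, ← hlmi_map]
  have hdissip := (posSemidef_map_ofReal hlmi).mul_mul_conjTranspose_same L
  have hstorage := (posSemidef_map_ofReal hX).mul_mul_conjTranspose_same L
  exact (hdissip.add (hstorage.smul hscale)).smul (by exact_mod_cast hω)

end Certified

theorem ffni_lemma_general {n m : ℕ}
    (A : Matrix (Fin n) (Fin n) ℝ) (B : Matrix (Fin n) (Fin m) ℝ)
    (C : Matrix (Fin m) (Fin n) ℝ) (D : Matrix (Fin m) (Fin m) ℝ)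
    (hobs : IsObservable A C) (ωb : ℝ) (hωb : 0 < ωb)
    (hstable : ∀ μ ∈ eigs A, μ.re ≤ 0)
    (Φ : ℝ → Matrix (Fin n) (Fin n) ℂ)
    (hΦ : ∀ ω : ℝ, 0 < ω → ω ≤ ωb → I * ω ∈ eigs A →
      IsResolventResidue (A.map ofReal) (I * ω) (Φ ω)) :
    IsFFNI A B C D ωb ↔
      (A.det ≠ 0 ∧ D = Dᵀ ∧
        (∀ ω : ℝ, 0 < ω → ω ≤ ωb → I * ω ∈ eigs A →
          ((C * A).map ofReal * Φ ω * B.map ofReal).PosSemidef) ∧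
        ∃ Y X : Matrix (Fin n) (Fin n) ℝ, IsNICertificate A B C ωb Y X) := by
  constructor
  · intro h
    have hdet : A.det ≠ 0 := fun h0 => (h.1 0 (zero_mem_eigs_iff.2 h0)).1 rfl
    refine ⟨hdet, h.2.2.2, fun ω h0 h1 hmem => ?_, ?_⟩
    · exact (exists_tendsto_smul_tf_posSemidef_iff h0 (hΦ ω h0 h1 hmem)).1 (h.2.2.1 ω h0 h1 hmem)
    · exact exists_isNICertificate_of_frequency_nonneg hdet.isUnit hobs hωb
        (h.re_dotProduct_nonneg hobs hΦ)
  · rintro ⟨hdet, hD, hres, Y, X, hcert⟩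
    refine ⟨fun μ hμ => ⟨?_, hstable μ hμ⟩, fun ω h0 h1 hmem => ?_, fun ω h0 h1 hmem => ?_, hD⟩
    · rintro rfl
      exact hdet (zero_mem_eigs_iff.1 hμ)
    · exact hcert.posSemidef_smul_tf_sub hD h0.le h1 hmem
    · exact (exists_tendsto_smul_tf_posSemidef_iff h0 (hΦ ω h0 h1 hmem)).2 (hres ω h0 h1 hmem)

/-- The finite frequency Negative Imaginary Lemma (LMI form (4) of Theorem 8). -/
theorem ffni_lemma {n m : ℕ}
    (A : Matrix (Fin n) (Fin n) ℝ) (B : Matrix (Fin n) (Fin m) ℝ)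
    (C : Matrix (Fin m) (Fin n) ℝ) (D : Matrix (Fin m) (Fin m) ℝ)
    (hmin : IsMinimal A B C) (ωb : ℝ) (hωb : 0 < ωb)
    (hstable : ∀ μ ∈ eigs A, μ.re ≤ 0)
    (Φ : ℝ → Matrix (Fin n) (Fin n) ℂ)
    (hΦ : ∀ ω : ℝ, 0 < ω → ω ≤ ωb → (Complex.I * ω) ∈ eigs A →
      Tendsto (fun s : ℂ =>
          (s - Complex.I * ω) • (s • (1 : Matrix (Fin n) (Fin n) ℂ) - A.map Complex.ofReal)⁻¹)
        (𝓝[≠] (Complex.I * ω)) (𝓝 (Φ ω))) :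
    IsFFNI A B C D ωb ↔
      (A.det ≠ 0 ∧ D = Dᵀ ∧
        (∀ ω : ℝ, 0 < ω → ω ≤ ωb → (Complex.I * ω) ∈ eigs A →
          ((C * A).map Complex.ofReal * Φ ω * B.map Complex.ofReal).PosSemidef) ∧
        ∃ (Y X : Matrix (Fin n) (Fin n) ℝ), Yᵀ = Y ∧ X.PosSemidef ∧
          (-(A * Y + Y * Aᵀ - A * X * Aᵀ + (ωb ^ 2) • X)).PosSemidef ∧
          B + A * Y * Cᵀ = 0 ∧ C * X = 0) :=
  ffni_lemma_general A B C D (isObservable_of_rank_eq hmin.2) ωb hωb hstable Φ hΦ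
end

section
/- Let (A,B,C,D) be a minimal state-space realization of a SISO transfer function G(s) = C(sI − A)⁻¹B + D (A ∈ ℝ^{n×n}, B ∈ ℝ^{n×1}, C ∈ ℝ^{1×n}, D ∈ ℝ) with CB > 0. Assume: every eigenvalue of A has nonpositive real part, 0 is not an eigenvalue of A, every purely imaginary eigenvalue of A is simple (algebraic multiplicity one), and G has no zeros in the open right half-plane, i.e., G(s) ≠ 0 for every s ∈ ℂ with Re(s) > 0. Then G is negative imaginary if and only if: (1) the matrix (I − (1/(CB))·BC)·A² has no eigenvalue of odd algebraic multiplicity on the open negative real axis (−∞, 0); and (2) for every ω₀ ∈ ℝ, ω₀ ≠ 0, such that jω₀ is an eigenvalue of A, the residue lim_{s→jω₀}(s − jω₀)·s·(G(s) − D) exists and is a positive real number. -/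
open Matrix Filter Topology ComplexOrder

/-- Scalar transfer function of a SISO system `(A,B,C,D)`. -/
noncomputable def sisoTf {n : ℕ} (A : Matrix (Fin n) (Fin n) ℝ) (B : Matrix (Fin n) (Fin 1) ℝ)
    (C : Matrix (Fin 1) (Fin n) ℝ) (D : ℝ) (s : ℂ) : ℂ :=
  (C.map Complex.ofReal * (s • (1 : Matrix (Fin n) (Fin n) ℂ) - A.map Complex.ofReal)⁻¹ *
      B.map Complex.ofReal) 0 0 + D

/-- A SISO system is negative imaginary. -/
noncomputable def SisoNI {n : ℕ} (A : Matrix (Fin n) (Fin n) ℝ) (B : Matrix (Fin n) (Fin 1) ℝ)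
    (C : Matrix (Fin 1) (Fin n) ℝ) (D : ℝ) : Prop :=
  (∀ μ ∈ eigs A, μ ≠ 0 ∧ μ.re ≤ 0) ∧
  (∀ ω : ℝ, 0 < ω → (Complex.I * ω) ∉ eigs A → (sisoTf A B C D (Complex.I * ω)).im ≤ 0) ∧
  (∀ ω : ℝ, 0 < ω → (Complex.I * ω) ∈ eigs A →
    ∃ k : ℝ, 0 ≤ k ∧
      Filter.Tendsto (fun s : ℂ => (s - Complex.I * ω) * (Complex.I * sisoTf A B C D s))
        (nhdsWithin (Complex.I * ω) {Complex.I * ω}ᶜ) (nhds (k : ℂ)))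

/-!
Let `χ` and `q` be the characteristic polynomials of `A` and of `(I - B (CB)⁻¹ C) A²`. The matrix
determinant lemma gives `CB q(z) = z det(zI - A²) C (zI - A²)⁻¹ B`, and for `z = s²` the factor
`2 s C (s²I - A²)⁻¹ B` is the odd part `G(s) - G(-s)`. On the imaginary axis `G(-jω)` is the
conjugate of `G(jω)`, so that `CB q(-ω²) = -(-1)ⁿ |χ(jω)|² ω Im G(jω)`. Hence `Im G(jω) ≤ 0` off
the poles if and only if `(-1)ⁿ q` is nonnegative on the negative axis; since `(-1)ⁿ q > 0` near
`-∞`, this says that `q` never changes sign there, i.e. that all its negative roots have even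
multiplicity.

At an eigenvalue `jω`, a residue `k` of `jG` corresponds to the residue `ωk` of `s (G(s) - D)`.
Minimality excludes `k = 0`: if `(s - jω) G(s) → 0`, then the same holds for `C Aⁱ (sI - A)⁻¹ Aᵏ B`,
hence, through one-sided inverses of the observability and controllability matrices, for the
resolvent itself, which is impossible on an eigenvector.
-/

section Polynomial

open Polynomial Asymptotics

variable {p : ℝ[X]}

lemma eval_mul_eval_nonneg_of_even_rootMultiplicity {s : Set ℝ} (hs : s.OrdConnected)
    (hp : ∀ x ∈ s, Even (p.rootMultiplicity x)) {x y : ℝ} (hx : x ∈ s) (hy : y ∈ s) :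
    0 ≤ p.eval x * p.eval y := by
  induction hd : p.natDegree using Nat.strong_induction_on generalizing p with
  | _ d ih =>
    by_contra! hneg
    have hp0 : p ≠ 0 := by rintro rfl; simp at hneg
    obtain ⟨z, hz, hpz⟩ : ∃ z ∈ s, p.IsRoot z := by
      have hmem : (0 : ℝ) ∈ Set.uIcc (p.eval x) (p.eval y) := by
        rcases mul_neg_iff.1 hneg with h | h
        · exact Set.mem_uIcc_of_ge h.2.le h.1.le
        · exact Set.mem_uIcc_of_le h.1.le h.2.le
      obtain ⟨z, hz, hpz⟩ := intermediate_value_uIcc p.continuous.continuousOn hmem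
      exact ⟨z, hs.uIcc_subset hx hy hz, hpz⟩
    have htwo : 2 ≤ p.rootMultiplicity z := by
      have := (rootMultiplicity_pos hp0).2 hpz
      obtain ⟨k, hk⟩ := hp z hz
      lia
    obtain ⟨r, rfl⟩ := (le_rootMultiplicity_iff hp0).1 htwo
    have hr0 : r ≠ 0 := right_ne_zero_of_mul hp0
    have hr : ∀ w ∈ s, Even (r.rootMultiplicity w) := fun w hw => by
      have := hp w hw
      rw [rootMultiplicity_mul hp0, ← count_roots, roots_pow, Multiset.count_nsmul] at this
      exact (Nat.even_add.1 this).1 (even_two_mul _)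
    have hdeg : r.natDegree < d := by
      rw [← hd, natDegree_mul (left_ne_zero_of_mul hp0) hr0]
      simp
    have hnonneg := mul_nonneg (sq_nonneg ((x - z) * (y - z))) (ih _ hdeg hr rfl)
    simp only [eval_mul, eval_pow, eval_sub, eval_X, eval_C] at hneg
    linarith

lemma eventually_atBot_neg_one_pow_mul_eval_pos (hp : 0 < p.leadingCoeff) :
    ∀ᶠ x in atBot, 0 < (-1) ^ p.natDegree * p.eval x := by
  obtain ⟨φ, hφ, hpφ⟩ := p.isEquivalent_atBot_lead.exists_eq_mul
  filter_upwards [hpφ, hφ.eventually_const_lt one_pos, eventually_lt_atBot 0] with x hx hφx hx0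
  have hpos := mul_pos hφx (mul_pos hp (pow_pos (neg_pos.2 hx0) p.natDegree))
  rw [neg_pow] at hpos
  rw [hx, Pi.mul_apply]
  linarith

lemma neg_one_pow_mul_eval_nonneg_of_even_rootMultiplicity (hp : 0 < p.leadingCoeff) {a : ℝ}
    (heven : ∀ x < a, Even (p.rootMultiplicity x)) {x : ℝ} (hx : x < a) :
    0 ≤ (-1) ^ p.natDegree * p.eval x := by
  obtain ⟨y, hy, hya⟩ :=
    ((eventually_atBot_neg_one_pow_mul_eval_pos hp).and (eventually_lt_atBot a)).exists
  refine nonneg_of_mul_nonneg_left ?_ hy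
  calc 0 ≤ ((-1) ^ p.natDegree) ^ 2 * (p.eval x * p.eval y) :=
        mul_nonneg (sq_nonneg _) <|
          eval_mul_eval_nonneg_of_even_rootMultiplicity Set.ordConnected_Iio heven hx hya
    _ = (-1) ^ p.natDegree * p.eval x * ((-1) ^ p.natDegree * p.eval y) := by ring

lemma even_rootMultiplicity_of_eventually_mul_eval_nonneg {c x : ℝ} (hc : c ≠ 0)
    (h : ∀ᶠ y in 𝓝[≠] x, 0 ≤ c * p.eval y) : Even (p.rootMultiplicity x) := by
  rcases eq_or_ne p 0 with rfl | hp
  · simp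
  obtain ⟨r, hpr, hr⟩ := exists_eq_pow_rootMultiplicity_mul_and_not_dvd p hp x
  set m := p.rootMultiplicity x
  rw [dvd_iff_isRoot] at hr
  -- Near `x`, the sign of `c * p` is that of `(y - x) ^ m * (c * r.eval x)`.
  have hsign : ∀ᶠ y in 𝓝[≠] x, 0 ≤ (y - x) ^ m * (c * r.eval x) := by
    have hcont : Tendsto (fun y => c * r.eval x * (c * r.eval y)) (𝓝[≠] x)
        (𝓝 (c * r.eval x * (c * r.eval x))) :=
      ((by fun_prop : Continuous fun y => c * r.eval x * (c * r.eval y)).tendsto x).mono_left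
        nhdsWithin_le_nhds
    filter_upwards [h, hcont.eventually_const_lt (mul_self_pos.2 (mul_ne_zero hc hr))]
      with y hy hry
    have hpy : p.eval y = (y - x) ^ m * r.eval y := by rw [hpr]; simp
    refine nonneg_of_mul_nonneg_left (b := (c * r.eval y) ^ 2) ?_ ?_
    · rw [hpy] at hy
      nlinarith [mul_nonneg hy hry.le]
    · exact sq_pos_of_ne_zero (right_ne_zero_of_mul hry.ne')
  by_contra hodd
  rw [Nat.not_even_iff_odd] at hodd
  obtain ⟨y, hy, hxy⟩ :=
    ((hsign.filter_mono (nhdsGT_le_nhdsNE x)).and self_mem_nhdsWithin).exists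
  obtain ⟨z, hz, hzx⟩ :=
    ((hsign.filter_mono (nhdsLT_le_nhdsNE x)).and self_mem_nhdsWithin).exists
  have hpos : 0 ≤ c * r.eval x := nonneg_of_mul_nonneg_right hy (pow_pos (sub_pos.2 hxy) m)
  have hneg : c * r.eval x ≤ 0 := nonpos_of_mul_nonneg_right hz (hodd.pow_neg (sub_neg.2 hzx))
  exact mul_ne_zero hc hr (hneg.antisymm hpos)

end Polynomial

section TransferMatrix

variable {ι m p R S K L : Type*} [CommRing R] [CommRing S] [Field K] [Field L]
  [DecidableEq ι]

lemma map_smul_one_sub (f : R →+* S) (A : Matrix ι ι R) (s : R) :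
    (s • 1 - A).map f = f s • 1 - A.map f := by
  rw [smul_one_eq_diagonal, smul_one_eq_diagonal, Matrix.map_sub f (map_sub f),
    diagonal_map (map_zero f)]

variable [Fintype ι]

/-- The strictly proper part `C (sI - A)⁻¹ B` of the transfer function of `(A, B, C, D)`. Where
`sI - A` is singular the nonsingular inverse makes it `0`. -/
noncomputable def transferMatrix (A : Matrix ι ι R) (B : Matrix ι m R) (C : Matrix p ι R) (s : R) :
    Matrix p m R :=
  C * (s • 1 - A)⁻¹ * B

lemma eval_charpoly_eq_det_smul_one_sub (A : Matrix ι ι R) (s : R) :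
    A.charpoly.eval s = (s • 1 - A).det := by
  rw [eval_charpoly, scalar_apply, smul_one_eq_diagonal]

lemma eval_charpoly_map (f : R →+* S) (A : Matrix ι ι R) (s : R) :
    (A.map f).charpoly.eval (f s) = f (A.charpoly.eval s) := by
  rw [charpoly_map, Polynomial.eval_map, Polynomial.eval₂_hom]

lemma rootMultiplicity_charpoly_map {f : R →+* S} (hf : Function.Injective f) (A : Matrix ι ι R)
    (s : R) : (A.map f).charpoly.rootMultiplicity (f s) = A.charpoly.rootMultiplicity s := by
  rw [charpoly_map, ← Polynomial.eq_rootMultiplicity_map hf]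

lemma mul_inv_smul_one_sub {A : Matrix ι ι R} {s : R} (hs : IsUnit (A.charpoly.eval s)) :
    A * (s • 1 - A)⁻¹ = s • (s • 1 - A)⁻¹ - 1 := by
  rw [eval_charpoly_eq_det_smul_one_sub] at hs
  have h := mul_nonsing_inv _ hs
  rw [sub_mul, smul_mul_assoc, one_mul] at h
  exact eq_sub_of_add_eq' (sub_eq_iff_eq_add.1 h).symm

lemma commute_inv_smul_one_sub (A : Matrix ι ι R) (s : R) : Commute A (s • 1 - A)⁻¹ := by
  have h : Commute A (s • 1 - A) :=
    ((Commute.one_right A).smul_right s).sub_right (Commute.refl A)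
  simpa only [Matrix.zpow_neg_one] using Matrix.Commute.zpow_right h (-1)

lemma map_nonsing_inv (f : K →+* L) (M : Matrix ι ι K) : M⁻¹.map f = (M.map f)⁻¹ := by
  rw [inv_def, inv_def, Ring.inverse_eq_inv, Ring.inverse_eq_inv, ← RingHom.mapMatrix_apply,
    ← RingHom.mapMatrix_apply, ← RingHom.map_adjugate, ← RingHom.map_det, ← map_inv₀]
  ext i j
  simp

lemma map_transferMatrix (f : K →+* L) (A : Matrix ι ι K) (B : Matrix ι m K)
    (C : Matrix p ι K) (s : K) :
    (transferMatrix A B C s).map f = transferMatrix (A.map f) (B.map f) (C.map f) (f s) := by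
  simp only [transferMatrix, Matrix.map_mul, map_nonsing_inv, map_smul_one_sub]

lemma sq_smul_one_sub_sq (A : Matrix ι ι R) (s : R) :
    s ^ 2 • 1 - A ^ 2 = -(((-s) • 1 - A) * (s • 1 - A)) := by
  simp only [sub_mul, mul_sub, smul_mul_assoc, mul_smul_comm, one_mul, mul_one, pow_two]
  module

lemma eval_sq_charpoly_sq (A : Matrix ι ι R) (s : R) :
    (A ^ 2).charpoly.eval (s ^ 2) =
      (-1) ^ Fintype.card ι * A.charpoly.eval s * A.charpoly.eval (-s) := by
  simp only [eval_charpoly_eq_det_smul_one_sub]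
  rw [sq_smul_one_sub_sq, det_neg, det_mul]
  ring

lemma two_mul_smul_transferMatrix_sq {A : Matrix ι ι R} {s : R}
    (hs : IsUnit (A.charpoly.eval s)) (hs' : IsUnit (A.charpoly.eval (-s)))
    (B : Matrix ι m R) (C : Matrix p ι R) :
    (2 * s) • transferMatrix (A ^ 2) B C (s ^ 2) =
      transferMatrix A B C s - transferMatrix A B C (-s) := by
  rw [eval_charpoly_eq_det_smul_one_sub, ← isUnit_iff_isUnit_det] at hs hs'
  have hinv : (s ^ 2 • 1 - A ^ 2)⁻¹ = -((s • 1 - A)⁻¹ * ((-s) • 1 - A)⁻¹) := by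
    rw [sq_smul_one_sub_sq, ← Matrix.mul_inv_rev]
    apply inv_eq_left_inv
    rw [neg_mul_neg, nonsing_inv_mul]
    exact (isUnit_iff_isUnit_det _).1 (hs'.mul hs)
  have hdiff : (s • 1 - A)⁻¹ - ((-s) • 1 - A)⁻¹ = (2 * s) • (s ^ 2 • 1 - A ^ 2)⁻¹ := by
    have hgap : ((-s) • 1 - A) - (s • 1 - A) = -((2 * s) • (1 : Matrix ι ι R)) := by
      rw [two_mul, add_smul, neg_smul]
      abel
    rw [inv_sub_inv (iff_of_true hs hs'), hgap, hinv]
    simp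
  rw [transferMatrix, transferMatrix, transferMatrix, ← Matrix.sub_mul, ← Matrix.mul_sub, hdiff,
    Matrix.mul_smul, Matrix.smul_mul]

variable [Fintype m] [DecidableEq m]

/-- The projection `I - B (CB)⁻¹ C` onto the kernel of `C` along the range of `B`, for `CB`
invertible. -/
noncomputable def obliqueProj (B : Matrix ι m R) (C : Matrix m ι R) : Matrix ι ι R :=
  1 - B * (C * B)⁻¹ * C

lemma map_obliqueProj (f : K →+* L) (B : Matrix ι m K) (C : Matrix m ι K) :
    (obliqueProj B C).map f = obliqueProj (B.map f) (C.map f) := by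
  simp only [obliqueProj, Matrix.map_sub f (map_sub f), Matrix.map_mul, map_nonsing_inv,
    Matrix.map_one f (map_zero f) (map_one f)]

lemma obliqueProj_of_unique [Unique m] (B : Matrix ι m K) (C : Matrix m ι K) :
    obliqueProj B C = 1 - (1 / (C * B) default default) • (B * C) := by
  have hinv : (C * B)⁻¹ = ((C * B) default default)⁻¹ • (1 : Matrix m m K) := by
    rw [inv_subsingleton, smul_one_eq_diagonal]
    congr
    ext i
    rw [Unique.eq_default i, Ring.inverse_eq_inv]
  rw [obliqueProj, hinv, Matrix.mul_smul, Matrix.mul_one, Matrix.smul_mul, one_div]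

lemma det_mul_eval_charpoly_obliqueProj_mul {B : Matrix ι m R} {C : Matrix m ι R}
    {Q : Matrix ι ι R} {z : R} (hCB : IsUnit (C * B).det) (hz : IsUnit (Q.charpoly.eval z)) :
    (C * B).det * (obliqueProj B C * Q).charpoly.eval z =
      Q.charpoly.eval z * (z • transferMatrix Q B C z).det := by
  have hdet := hz
  rw [eval_charpoly_eq_det_smul_one_sub] at hdet
  have hrank : z • 1 - obliqueProj B C * Q = (z • 1 - Q) + B * ((C * B)⁻¹ * C * Q) := by
    simp only [obliqueProj, Matrix.sub_mul, Matrix.one_mul, Matrix.mul_assoc]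
    abel
  have hsmall : C * B * (1 + (C * B)⁻¹ * C * Q * (z • 1 - Q)⁻¹ * B) =
      z • transferMatrix Q B C z := by
    calc C * B * (1 + (C * B)⁻¹ * C * Q * (z • 1 - Q)⁻¹ * B)
        = C * B + C * B * (C * B)⁻¹ * (C * (Q * (z • 1 - Q)⁻¹) * B) := by
          simp only [Matrix.mul_add, Matrix.mul_one, Matrix.mul_assoc]
      _ = C * B + C * (z • (z • 1 - Q)⁻¹ - 1) * B := by
          rw [mul_nonsing_inv _ hCB, Matrix.one_mul, mul_inv_smul_one_sub hz]
      _ = z • transferMatrix Q B C z := by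
          simp [transferMatrix, Matrix.mul_sub, Matrix.sub_mul]
  rw [eval_charpoly_eq_det_smul_one_sub, eval_charpoly_eq_det_smul_one_sub, hrank,
    det_add_mul _ _ hdet, mul_left_comm, ← det_mul, hsmall]

lemma two_pow_mul_det_mul_eval_sq_charpoly_obliqueProj_mul_sq {A : Matrix ι ι R}
    {B : Matrix ι m R} {C : Matrix m ι R} {s : R} (hCB : IsUnit (C * B).det)
    (hs : IsUnit (A.charpoly.eval s)) (hs' : IsUnit (A.charpoly.eval (-s))) :
    2 ^ Fintype.card m * ((C * B).det * (obliqueProj B C * A ^ 2).charpoly.eval (s ^ 2)) =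
      (-1) ^ Fintype.card ι * A.charpoly.eval s * A.charpoly.eval (-s) *
        (s • (transferMatrix A B C s - transferMatrix A B C (-s))).det := by
  have hsq : IsUnit ((A ^ 2).charpoly.eval (s ^ 2)) := by
    rw [eval_sq_charpoly_sq]
    exact ((isUnit_one.neg.pow _).mul hs).mul hs'
  rw [det_mul_eval_charpoly_obliqueProj_mul hCB hsq, mul_left_comm, ← det_smul,
    ← two_mul_smul_transferMatrix_sq hs hs', eval_sq_charpoly_sq, smul_smul, smul_smul]
  congr 3
  ring

end TransferMatrix

section Minimality

lemma exists_right_inverse_of_rank_eq_card {K ι κ : Type*} [Field K] [Fintype ι] [Fintype κ]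
    [DecidableEq ι] {M : Matrix ι κ K} (hM : M.rank = Fintype.card ι) :
    ∃ N : Matrix κ ι K, M * N = 1 := by
  rw [← mulVec_surjective_iff_exists_right_inverse]
  have htop : M.mulVecLin.range = ⊤ :=
    Submodule.eq_top_of_finrank_eq (by rw [Module.finrank_pi, ← hM, rank])
  exact LinearMap.range_eq_top.1 htop

lemma exists_left_inverse_of_rank_eq_card {K ι κ : Type*} [Field K] [Fintype ι] [Fintype κ]
    [DecidableEq κ] {M : Matrix ι κ K} (hM : M.rank = Fintype.card κ) :
    ∃ N : Matrix κ ι K, N * M = 1 := by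
  rw [← rank_transpose] at hM
  obtain ⟨N, hN⟩ := exists_right_inverse_of_rank_eq_card hM
  exact ⟨Nᵀ, by rw [← transpose_inj, transpose_mul, transpose_transpose, hN, transpose_one]⟩

variable {ι m p R S : Type*} [Fintype ι] [DecidableEq ι] [CommRing R] [CommRing S]

/-- The controllability matrix `[B, AB, …, Aᵏ⁻¹B]`, its columns indexed by the power of `A` and
the column of `B`. -/
def controllabilityMatrix (k : ℕ) (A : Matrix ι ι R) (B : Matrix ι m R) :
    Matrix ι (Fin k × m) R :=
  Matrix.of fun i q => (A ^ (q.1 : ℕ) * B) i q.2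

/-- The observability matrix, whose blocks of rows are `C, CA, …, CAᵏ⁻¹`. -/
def observabilityMatrix (k : ℕ) (A : Matrix ι ι R) (C : Matrix p ι R) :
    Matrix (Fin k × p) ι R :=
  Matrix.of fun q i => (C * A ^ (q.1 : ℕ)) q.2 i

lemma map_controllabilityMatrix (f : R →+* S) (k : ℕ) (A : Matrix ι ι R) (B : Matrix ι m R) :
    (controllabilityMatrix k A B).map f = controllabilityMatrix k (A.map f) (B.map f) := by
  ext i q
  simp [controllabilityMatrix, ← Matrix.map_pow, ← Matrix.map_mul]

lemma map_observabilityMatrix (f : R →+* S) (k : ℕ) (A : Matrix ι ι R) (C : Matrix p ι R) :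
    (observabilityMatrix k A C).map f = observabilityMatrix k (A.map f) (C.map f) := by
  ext q i
  simp [observabilityMatrix, ← Matrix.map_pow, ← Matrix.map_mul]

lemma transferMatrix_mul_left {A : Matrix ι ι R} {s : R} (hs : IsUnit (A.charpoly.eval s))
    (B : Matrix ι m R) (C : Matrix p ι R) :
    transferMatrix A (A * B) C s = s • transferMatrix A B C s - C * B := by
  rw [transferMatrix, ← Matrix.mul_assoc, Matrix.mul_assoc C,
    ← (commute_inv_smul_one_sub A s).eq, mul_inv_smul_one_sub hs,
    Matrix.mul_sub, Matrix.sub_mul, Matrix.mul_smul, Matrix.smul_mul, Matrix.mul_one,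
    transferMatrix]

lemma transferMatrix_controllabilityMatrix_observabilityMatrix_apply (k : ℕ) (A : Matrix ι ι R)
    (B : Matrix ι m R) (C : Matrix p ι R) (s : R) (x : Fin k × p) (y : Fin k × m) :
    transferMatrix A (controllabilityMatrix k A B) (observabilityMatrix k A C) s x y =
      transferMatrix A (A ^ (x.1 + y.1 : ℕ) * B) C s x.2 y.2 := by
  calc transferMatrix A (controllabilityMatrix k A B) (observabilityMatrix k A C) s x y
      = (C * A ^ (x.1 : ℕ) * (s • 1 - A)⁻¹ * (A ^ (y.1 : ℕ) * B)) x.2 y.2 := by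
        simp [transferMatrix, Matrix.mul_apply, observabilityMatrix, controllabilityMatrix]
    _ = transferMatrix A (A ^ (x.1 + y.1 : ℕ) * B) C s x.2 y.2 := by
        rw [Matrix.mul_assoc C, ((commute_inv_smul_one_sub A s).pow_left _).eq, transferMatrix,
          pow_add]
        simp only [Matrix.mul_assoc]

lemma eventually_isUnit_eval_charpoly (a : Matrix ι ι ℂ) (l : ℂ) :
    ∀ᶠ s in 𝓝[≠] l, IsUnit (a.charpoly.eval s) := by
  filter_upwards [nhdsNE_le_cofinite l (a.finite_spectrum.compl_mem_cofinite)] with s hs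
  rw [Set.mem_compl_iff, mem_spectrum_iff_isRoot_charpoly] at hs
  exact isUnit_iff_ne_zero.2 hs

lemma tendsto_sub_smul_transferMatrix_pow_mul {a : Matrix ι ι ℂ} {b : Matrix ι m ℂ}
    {c : Matrix p ι ℂ} {l : ℂ}
    (h : Tendsto (fun s => (s - l) • transferMatrix a b c s) (𝓝[≠] l) (𝓝 0)) (k : ℕ) :
    Tendsto (fun s => (s - l) • transferMatrix a (a ^ k * b) c s) (𝓝[≠] l) (𝓝 0) := by
  induction k with
  | zero => simpa
  | succ k ih =>
    have hid : Tendsto (fun s : ℂ => s) (𝓝[≠] l) (𝓝 l) := nhdsWithin_le_nhds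
    have hlim := (hid.smul ih).sub ((hid.sub_const l).smul_const (c * (a ^ k * b)))
    rw [sub_self, zero_smul, smul_zero, sub_self] at hlim
    refine hlim.congr' ?_
    filter_upwards [eventually_isUnit_eval_charpoly a l] with s hs
    rw [pow_succ', Matrix.mul_assoc, transferMatrix_mul_left hs, smul_sub, smul_comm]

lemma tendsto_sub_smul_inv_of_tendsto_transferMatrix {a : Matrix ι ι ℂ} {b : Matrix ι m ℂ}
    {c : Matrix p ι ℂ} {l : ℂ} [Fintype m] [Fintype p] {k : ℕ} {P : Matrix (Fin k × m) ι ℂ}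
    {Q : Matrix ι (Fin k × p) ℂ} (hP : controllabilityMatrix k a b * P = 1)
    (hQ : Q * observabilityMatrix k a c = 1)
    (h : Tendsto (fun s => (s - l) • transferMatrix a b c s) (𝓝[≠] l) (𝓝 0)) :
    Tendsto (fun s => (s - l) • (s • 1 - a)⁻¹) (𝓝[≠] l) (𝓝 0) := by
  have hOC : Tendsto (fun s => (s - l) •
      transferMatrix a (controllabilityMatrix k a b) (observabilityMatrix k a c) s)
      (𝓝[≠] l) (𝓝 0) := by
    refine tendsto_pi_nhds.2 fun x => tendsto_pi_nhds.2 fun y => ?_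
    simp only [Matrix.smul_apply, transferMatrix_controllabilityMatrix_observabilityMatrix_apply]
    exact tendsto_pi_nhds.1 (tendsto_pi_nhds.1
      (tendsto_sub_smul_transferMatrix_pow_mul h (x.1 + y.1)) x.2) y.2
  have hcont : Continuous fun M : Matrix (Fin k × p) (Fin k × m) ℂ => Q * M * P := by fun_prop
  have hlim := (hcont.tendsto 0).comp hOC
  rw [Matrix.mul_zero, Matrix.zero_mul] at hlim
  refine hlim.congr fun s => ?_
  calc Q * ((s - l) •
        transferMatrix a (controllabilityMatrix k a b) (observabilityMatrix k a c) s) * P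
      = (s - l) • (Q * observabilityMatrix k a c * (s • 1 - a)⁻¹ *
          (controllabilityMatrix k a b * P)) := by
        simp only [transferMatrix, Matrix.mul_smul, Matrix.smul_mul, Matrix.mul_assoc]
    _ = (s - l) • (s • 1 - a)⁻¹ := by rw [hP, hQ, Matrix.one_mul, Matrix.mul_one]

lemma not_isRoot_charpoly_of_tendsto_sub_smul_inv {a : Matrix ι ι ℂ} {l : ℂ}
    (h : Tendsto (fun s => (s - l) • (s • 1 - a)⁻¹) (𝓝[≠] l) (𝓝 0)) :
    ¬ a.charpoly.IsRoot l := by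
  intro hl
  rw [Polynomial.IsRoot, eval_charpoly_eq_det_smul_one_sub, ← exists_mulVec_eq_zero_iff] at hl
  obtain ⟨v, hv, hlv⟩ := hl
  have hfix : ∀ᶠ s in 𝓝[≠] l, ((s - l) • (s • 1 - a)⁻¹) *ᵥ v = v := by
    filter_upwards [eventually_isUnit_eval_charpoly a l] with s hs
    rw [eval_charpoly_eq_det_smul_one_sub] at hs
    have hsv : (s • 1 - a) *ᵥ v = (s - l) • v := by
      rw [← sub_eq_zero, ← hlv, sub_mulVec, sub_mulVec, smul_mulVec, smul_mulVec, one_mulVec,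
        sub_smul]
      abel
    rw [smul_mulVec, ← mulVec_smul, ← hsv, mulVec_mulVec, nonsing_inv_mul _ hs, one_mulVec]
  have hcont : Continuous fun M : Matrix ι ι ℂ => M *ᵥ v := by fun_prop
  have hlim := ((hcont.tendsto 0).comp h).congr' hfix
  rw [zero_mulVec] at hlim
  exact hv (tendsto_nhds_unique tendsto_const_nhds hlim)

lemma IsMinimal.not_tendsto_sub_smul_transferMatrix {n m : ℕ} {A : Matrix (Fin n) (Fin n) ℝ}
    {B : Matrix (Fin n) (Fin m) ℝ} {C : Matrix (Fin m) (Fin n) ℝ} (hmin : IsMinimal A B C)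
    {l : ℂ} (hl : l ∈ eigs A) :
    ¬ Tendsto (fun s => (s - l) • transferMatrix (A.map Complex.ofReal) (B.map Complex.ofReal)
      (C.map Complex.ofReal) s) (𝓝[≠] l) (𝓝 0) := by
  intro h
  have hctrb : (controllabilityMatrix n A B).rank = n := hmin.1
  have hobs : (observabilityMatrix n A C).rank = n := hmin.2
  obtain ⟨P, hP⟩ := exists_right_inverse_of_rank_eq_card
    (hctrb.trans (Fintype.card_fin n).symm)
  obtain ⟨Q, hQ⟩ := exists_left_inverse_of_rank_eq_card (hobs.trans (Fintype.card_fin n).symm)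
  apply_fun (fun M => M.map Complex.ofRealHom) at hP hQ
  rw [Matrix.map_mul, map_controllabilityMatrix, Matrix.map_one _ (map_zero _) (map_one _)] at hP
  rw [Matrix.map_mul, map_observabilityMatrix, Matrix.map_one _ (map_zero _) (map_one _)] at hQ
  exact not_isRoot_charpoly_of_tendsto_sub_smul_inv
    (tendsto_sub_smul_inv_of_tendsto_transferMatrix hP hQ h)
    (mem_spectrum_iff_isRoot_charpoly.1 hl)

end Minimality

section Residue

open Complex ComplexConjugate

lemma tendsto_sub_mul_mul_sub_iff {K : Type*} [Field K] [TopologicalSpace K]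
    [IsTopologicalDivisionRing K] [T1Space K] {g : K → K} {d l r : K} (hl : l ≠ 0) :
    Tendsto (fun s => (s - l) * (s * (g s - d))) (𝓝[≠] l) (𝓝 (l * r)) ↔
      Tendsto (fun s => (s - l) * g s) (𝓝[≠] l) (𝓝 r) := by
  have hid : Tendsto (fun s : K => s) (𝓝[≠] l) (𝓝 l) := nhdsWithin_le_nhds
  have hconst : Tendsto (fun s => (s - l) * d) (𝓝[≠] l) (𝓝 0) := by
    simpa using (hid.sub_const l).mul_const d
  constructor
  · intro h
    have hlim := ((hid.inv₀ hl).mul h).add hconst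
    rw [inv_mul_cancel_left₀ hl, add_zero] at hlim
    refine hlim.congr' ?_
    filter_upwards [hid.eventually_ne hl] with s hs
    field_simp
    ring
  · intro h
    have hlim := hid.mul (h.sub hconst)
    rw [sub_zero] at hlim
    exact hlim.congr fun s => by ring

lemma tendsto_sub_mul_conj {g : ℂ → ℂ} (hg : ∀ s, g (conj s) = conj (g s)) {l r : ℂ}
    (h : Tendsto (fun s => (s - l) * g s) (𝓝[≠] l) (𝓝 r)) :
    Tendsto (fun s => (s - conj l) * g s) (𝓝[≠] (conj l)) (𝓝 (conj r)) := by
  have hconj : Tendsto conj (𝓝[≠] (conj l)) (𝓝[≠] l) := by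
    refine tendsto_nhdsWithin_iff.2 ⟨?_, ?_⟩
    · simpa using (continuous_conj.tendsto (conj l)).mono_left nhdsWithin_le_nhds
    · filter_upwards [self_mem_nhdsWithin] with s hs
      exact fun h => hs ((conj_conj s).symm.trans (congrArg conj h))
  refine ((continuous_conj.tendsto r).comp (h.comp hconj)).congr fun s => ?_
  simp [hg]

lemma tendsto_sub_mul_I_mul_iff {g : ℂ → ℂ} {d : ℂ} {ω k : ℝ} (hω : ω ≠ 0) :
    Tendsto (fun s => (s - I * ω) * (I * g s)) (𝓝[≠] (I * ω)) (𝓝 k) ↔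
      Tendsto (fun s => (s - I * ω) * (s * (g s - d))) (𝓝[≠] (I * ω)) (𝓝 (ω * k : ℝ)) := by
  have hl : I * ω ≠ 0 := mul_ne_zero I_ne_zero (ofReal_ne_zero.2 hω)
  have hres : ((ω * k : ℝ) : ℂ) = I * ω * (-I * k) := by
    push_cast
    linear_combination (ω * k : ℂ) * I_sq
  rw [hres, tendsto_sub_mul_mul_sub_iff hl,
    ← tendsto_const_smul_iff₀ (neg_ne_zero.2 I_ne_zero), smul_eq_mul]
  refine tendsto_congr fun s => ?_
  rw [smul_eq_mul]
  linear_combination (-(s - I * ω) * g s) * I_sq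

end Residue

section Siso

open Complex ComplexConjugate

variable {n : ℕ} {A : Matrix (Fin n) (Fin n) ℝ} {B : Matrix (Fin n) (Fin 1) ℝ}
  {C : Matrix (Fin 1) (Fin n) ℝ} {D : ℝ}

lemma sisoTf_eq (s : ℂ) :
    sisoTf A B C D s =
      transferMatrix (A.map ofReal) (B.map ofReal) (C.map ofReal) s 0 0 + D := rfl

lemma map_ofReal_map_conj {ι κ : Type*} (M : Matrix ι κ ℝ) :
    (M.map ofReal).map conj = M.map ofReal := by
  ext
  simp

lemma sisoTf_conj (s : ℂ) : sisoTf A B C D (conj s) = conj (sisoTf A B C D s) := by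
  have h := congr_fun₂ (map_transferMatrix conj (A.map ofReal) (B.map ofReal)
    (C.map ofReal) s) 0 0
  simp only [map_ofReal_map_conj] at h
  rw [sisoTf_eq, sisoTf_eq, ← h, map_add, conj_ofReal, Matrix.map_apply]

lemma eval_charpoly_map_ofReal_conj (s : ℂ) :
    (A.map ofReal).charpoly.eval (conj s) = conj ((A.map ofReal).charpoly.eval s) := by
  rw [← eval_charpoly_map, map_ofReal_map_conj]

lemma mem_eigs_iff {s : ℂ} : s ∈ eigs A ↔ (A.map ofReal).charpoly.eval s = 0 :=
  mem_spectrum_iff_isRoot_charpoly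

lemma conj_mem_eigs_iff {s : ℂ} : conj s ∈ eigs A ↔ s ∈ eigs A := by
  rw [mem_eigs_iff, mem_eigs_iff, eval_charpoly_map_ofReal_conj, map_eq_zero]

lemma det_smul_transferMatrix_sub_transferMatrix_neg (ω : ℝ) :
    ((I * ω) • (transferMatrix (A.map ofReal) (B.map ofReal) (C.map ofReal) (I * ω) -
      transferMatrix (A.map ofReal) (B.map ofReal) (C.map ofReal) (-(I * ω)))).det =
      2 * (-ω * (sisoTf A B C D (I * ω)).im : ℝ) := by
  have hconj : -(I * ω) = conj (I * ω) := by simp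
  calc _ = I * ω * (sisoTf A B C D (I * ω) - sisoTf A B C D (-(I * ω))) := by
        simp [sisoTf_eq]
    _ = 2 * (-ω * (sisoTf A B C D (I * ω)).im : ℝ) := by
        rw [hconj, sisoTf_conj, sub_conj]
        push_cast
        linear_combination (2 * ω * (sisoTf A B C D (I * ω)).im : ℂ) * I_sq

lemma det_map_ofReal_mul : (C.map ofReal * B.map ofReal).det = ((C * B) 0 0 : ℝ) := by
  rw [det_unique]
  exact congr_fun₂ (Matrix.map_mul (f := ofRealHom)).symm 0 0

lemma eval_sq_charpoly_obliqueProj_map_ofReal (ω : ℝ) :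
    (obliqueProj (B.map ofReal) (C.map ofReal) * A.map ofReal ^ 2).charpoly.eval ((I * ω) ^ 2) =
      ((obliqueProj B C * A ^ 2).charpoly.eval (-ω ^ 2) : ℝ) := by
  have hω : (I * ω) ^ 2 = ofRealHom (-ω ^ 2) := by simp [mul_pow]
  have hmap : obliqueProj (B.map ofRealHom) (C.map ofRealHom) * A.map ofRealHom ^ 2 =
      (obliqueProj B C * A ^ 2).map ofRealHom := by
    rw [Matrix.map_mul, map_obliqueProj, Matrix.map_pow]
  exact hω ▸ hmap ▸ eval_charpoly_map ofRealHom (obliqueProj B C * A ^ 2) (-ω ^ 2)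

lemma mul_eval_neg_sq_charpoly_obliqueProj_mul_sq (hCB : (C * B) 0 0 ≠ 0) {ω : ℝ}
    (hω : I * ω ∉ eigs A) :
    (C * B) 0 0 * (obliqueProj B C * A ^ 2).charpoly.eval (-ω ^ 2) =
      (-1) ^ n * normSq ((A.map ofReal).charpoly.eval (I * ω)) *
        (-ω * (sisoTf A B C D (I * ω)).im) := by
  have hconj : (A.map ofReal).charpoly.eval (-(I * ω)) =
      conj ((A.map ofReal).charpoly.eval (I * ω)) := by
    rw [← eval_charpoly_map_ofReal_conj]
    simp
  have hχ : IsUnit ((A.map ofReal).charpoly.eval (I * ω)) :=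
    isUnit_iff_ne_zero.2 fun h => hω (mem_eigs_iff.2 h)
  have hχ' : IsUnit ((A.map ofReal).charpoly.eval (-(I * ω))) := hconj ▸ hχ.map conj
  have hdet : IsUnit (C.map ofReal * B.map ofReal).det := by
    rw [det_map_ofReal_mul]
    exact (ofReal_ne_zero.2 hCB).isUnit
  have hdetid := two_pow_mul_det_mul_eval_sq_charpoly_obliqueProj_mul_sq hdet hχ hχ'
  rw [det_map_ofReal_mul, eval_sq_charpoly_obliqueProj_map_ofReal,
    det_smul_transferMatrix_sub_transferMatrix_neg (D := D), hconj, mul_assoc ((-1) ^ _), mul_conj,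
    Fintype.card_fin, Fintype.card_fin] at hdetid
  rw [← ofReal_inj]
  push_cast at hdetid ⊢
  linear_combination hdetid / 2

lemma neg_one_pow_mul_eval_charpoly_nonneg_iff (hCB : 0 < (C * B) 0 0) {ω : ℝ} (hω : 0 < ω)
    (hωA : I * ω ∉ eigs A) :
    0 ≤ (-1) ^ n * (obliqueProj B C * A ^ 2).charpoly.eval (-ω ^ 2) ↔
      (sisoTf A B C D (I * ω)).im ≤ 0 := by
  have hpos : 0 < normSq ((A.map ofReal).charpoly.eval (I * ω)) * ω :=
    mul_pos (normSq_pos.2 fun h => hωA (mem_eigs_iff.2 h)) hω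
  have hid : (C * B) 0 0 * ((-1) ^ n * (obliqueProj B C * A ^ 2).charpoly.eval (-ω ^ 2)) =
      normSq ((A.map ofReal).charpoly.eval (I * ω)) * ω * -(sisoTf A B C D (I * ω)).im := by
    rw [mul_left_comm, mul_eval_neg_sq_charpoly_obliqueProj_mul_sq (D := D) hCB.ne' hωA]
    have hsign : ((-1 : ℝ) ^ n) * (-1) ^ n = 1 := by rw [← mul_pow]; simp
    linear_combination (-normSq ((A.map ofReal).charpoly.eval (I * ω)) * ω *
      (sisoTf A B C D (I * ω)).im) * hsign
  rw [← mul_nonneg_iff_of_pos_left hCB, hid, mul_nonneg_iff_of_pos_left hpos, neg_nonneg]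

lemma eventually_neg_and_I_mul_sqrt_notMem_eigs {x : ℝ} (hx : x < 0) :
    ∀ᶠ y in 𝓝[≠] x, y < 0 ∧ I * (√(-y) : ℝ) ∉ eigs A := by
  have hinj : Function.Injective fun ω : ℝ => I * ω :=
    (mul_right_injective₀ I_ne_zero).comp ofReal_injective
  have hfin : ((fun ω : ℝ => -ω ^ 2) '' ((fun ω : ℝ => I * ω) ⁻¹' eigs A)).Finite :=
    ((finite_spectrum _).preimage hinj.injOn).image _
  filter_upwards [nhdsNE_le_cofinite x hfin.compl_mem_cofinite,
    nhdsWithin_le_nhds (gt_mem_nhds hx)] with y hy hy0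
  refine ⟨hy0, fun hmem => hy ⟨√(-y), hmem, ?_⟩⟩
  simp [Real.sq_sqrt (neg_pos.2 hy0).le]

lemma im_sisoTf_nonpos_iff_even_rootMultiplicity (hCB : 0 < (C * B) 0 0) :
    (∀ ω : ℝ, 0 < ω → I * ω ∉ eigs A → (sisoTf A B C D (I * ω)).im ≤ 0) ↔
      ∀ x < 0, Even ((obliqueProj B C * A ^ 2).charpoly.rootMultiplicity x) := by
  have hdeg : (obliqueProj B C * A ^ 2).charpoly.natDegree = n := by
    rw [charpoly_natDegree_eq_dim, Fintype.card_fin]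
  constructor
  · intro him x hx
    refine even_rootMultiplicity_of_eventually_mul_eval_nonneg
      (pow_ne_zero n (neg_ne_zero.2 one_ne_zero)) ?_
    filter_upwards [eventually_neg_and_I_mul_sqrt_notMem_eigs hx] with y hy
    have hω : 0 < √(-y) := Real.sqrt_pos.2 (neg_pos.2 hy.1)
    have h := (neg_one_pow_mul_eval_charpoly_nonneg_iff hCB hω hy.2).2 (him _ hω hy.2)
    rwa [Real.sq_sqrt (neg_pos.2 hy.1).le, neg_neg] at h
  · intro heven ω hω hωA
    rw [← neg_one_pow_mul_eval_charpoly_nonneg_iff hCB hω hωA]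
    have h := neg_one_pow_mul_eval_nonneg_of_even_rootMultiplicity
      (by rw [(charpoly_monic _).leadingCoeff]; exact one_pos) heven
      (neg_neg_of_pos (pow_pos hω 2))
    rwa [hdeg] at h

lemma IsMinimal.not_tendsto_sub_mul_sisoTf (hmin : IsMinimal A B C) {l : ℂ} (hl : l ∈ eigs A) :
    ¬ Tendsto (fun s => (s - l) * sisoTf A B C D s) (𝓝[≠] l) (𝓝 0) := by
  intro h
  refine hmin.not_tendsto_sub_smul_transferMatrix hl
    (tendsto_pi_nhds.2 fun i => tendsto_pi_nhds.2 fun j => ?_)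
  have hid : Tendsto (fun s : ℂ => s) (𝓝[≠] l) (𝓝 l) := nhdsWithin_le_nhds
  have hlim := h.sub ((hid.sub_const l).mul_const (D : ℂ))
  rw [sub_self, zero_mul, sub_zero] at hlim
  refine hlim.congr fun s => ?_
  rw [Subsingleton.elim i 0, Subsingleton.elim j 0, sisoTf_eq, Matrix.smul_apply, smul_eq_mul]
  ring

lemma IsMinimal.exists_nonneg_tendsto_iff_exists_pos_tendsto (hmin : IsMinimal A B C) :
    (∀ ω : ℝ, 0 < ω → I * ω ∈ eigs A → ∃ k : ℝ, 0 ≤ k ∧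
      Tendsto (fun s => (s - I * ω) * (I * sisoTf A B C D s)) (𝓝[≠] (I * ω)) (𝓝 k)) ↔
    ∀ ω : ℝ, ω ≠ 0 → I * ω ∈ eigs A → ∃ r : ℝ, 0 < r ∧
      Tendsto (fun s => (s - I * ω) * (s * (sisoTf A B C D s - D))) (𝓝[≠] (I * ω)) (𝓝 r) := by
  constructor
  · intro h
    have hpos : ∀ ω : ℝ, 0 < ω → I * ω ∈ eigs A → ∃ r : ℝ, 0 < r ∧
        Tendsto (fun s => (s - I * ω) * (s * (sisoTf A B C D s - D)))
          (𝓝[≠] (I * ω)) (𝓝 r) := by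
      intro ω hω hωA
      obtain ⟨k, hk, hlim⟩ := h ω hω hωA
      have hk0 : k ≠ 0 := by
        rintro rfl
        refine hmin.not_tendsto_sub_mul_sisoTf hωA (D := D) ?_
        rw [← tendsto_const_smul_iff₀ I_ne_zero, smul_zero]
        simpa only [mul_left_comm _ I, ofReal_zero, smul_eq_mul] using hlim
      exact ⟨ω * k, mul_pos hω (hk.lt_of_ne' hk0), (tendsto_sub_mul_I_mul_iff hω.ne').1 hlim⟩
    intro ω hω hωA
    rcases hω.lt_or_gt with hneg | hω
    · have hconj : I * ω = conj (I * (-ω : ℝ)) := by simp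
      rw [hconj, conj_mem_eigs_iff] at hωA
      obtain ⟨r, hr, hlim⟩ := hpos (-ω) (neg_pos.2 hneg) hωA
      refine ⟨r, hr, ?_⟩
      rw [hconj, ← conj_ofReal r]
      exact tendsto_sub_mul_conj (fun s => by simp [sisoTf_conj]) hlim
    · exact hpos ω hω hωA
  · intro h ω hω hωA
    obtain ⟨r, hr, hlim⟩ := h ω hω.ne' hωA
    refine ⟨r / ω, (div_pos hr hω).le, (tendsto_sub_mul_I_mul_iff (d := D) hω.ne').2 ?_⟩
    rwa [mul_div_cancel₀ _ hω.ne']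

end Siso

theorem siso_ni_test_general {n : ℕ} (A : Matrix (Fin n) (Fin n) ℝ) (B : Matrix (Fin n) (Fin 1) ℝ)
    (C : Matrix (Fin 1) (Fin n) ℝ) (D : ℝ) (hmin : IsMinimal A B C) (hCB : 0 < (C * B) 0 0) :
    SisoNI A B C D ↔ (∀ μ ∈ eigs A, μ ≠ 0 ∧ μ.re ≤ 0) ∧
      (∀ x : ℝ, x < 0 →
        Even ((((1 - (1 / ((C * B) 0 0)) • (B * C)) * A ^ 2).map
          Complex.ofReal).charpoly.rootMultiplicity (x : ℂ))) ∧
      (∀ ω₀ : ℝ, ω₀ ≠ 0 → (Complex.I * ω₀) ∈ eigs A →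
        ∃ r : ℝ, 0 < r ∧
          Tendsto (fun s : ℂ => (s - Complex.I * ω₀) * (s * (sisoTf A B C D s - D)))
            (𝓝[≠] (Complex.I * ω₀)) (𝓝 (r : ℂ))) := by
  have hproj : 1 - (1 / (C * B) 0 0) • (B * C) = obliqueProj B C :=
    (obliqueProj_of_unique B C).symm
  have hmult (M : Matrix (Fin n) (Fin n) ℝ) (x : ℝ) :
      (M.map Complex.ofReal).charpoly.rootMultiplicity (x : ℂ) = M.charpoly.rootMultiplicity x :=
    rootMultiplicity_charpoly_map (f := Complex.ofRealHom) Complex.ofReal_injective M x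
  simp only [hproj, hmult]
  exact and_congr Iff.rfl (and_congr (im_sisoTf_nonpos_iff_even_rootMultiplicity hCB)
    hmin.exists_nonneg_tendsto_iff_exists_pos_tendsto)

/-- Eigenvalue/residue test for the NI property of a SISO system. -/
theorem siso_ni_test {n : ℕ}
    (A : Matrix (Fin n) (Fin n) ℝ) (B : Matrix (Fin n) (Fin 1) ℝ)
    (C : Matrix (Fin 1) (Fin n) ℝ) (D : ℝ)
    (hmin : IsMinimal A B C) (hCB : 0 < (C * B) 0 0)
    (hstable : ∀ μ ∈ eigs A, μ.re ≤ 0) (h0 : (0 : ℂ) ∉ eigs A)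
    (hsimple : ∀ ω : ℝ, (Complex.I * ω) ∈ eigs A →
      (A.map Complex.ofReal).charpoly.rootMultiplicity (Complex.I * ω) = 1)
    (hzeros : ∀ s : ℂ, 0 < s.re → sisoTf A B C D s ≠ 0) :
    SisoNI A B C D ↔
      ((∀ x : ℝ, x < 0 →
          Even ((((1 - (1 / ((C * B) 0 0)) • (B * C)) * A ^ 2).map
              Complex.ofReal).charpoly.rootMultiplicity (x : ℂ))) ∧
        (∀ ω₀ : ℝ, ω₀ ≠ 0 → (Complex.I * ω₀) ∈ eigs A →
          ∃ r : ℝ, 0 < r ∧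
            Filter.Tendsto (fun s : ℂ =>
                (s - Complex.I * ω₀) * (s * (sisoTf A B C D s - D)))
              (nhdsWithin (Complex.I * ω₀) {Complex.I * ω₀}ᶜ) (nhds (r : ℂ)))) := by
  rw [siso_ni_test_general A B C D hmin hCB,
    and_iff_right fun μ hμ => ⟨fun h => h0 (h ▸ hμ), hstable μ hμ⟩]
end
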